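/- Let Q be an affine quiver and let α be a positive real root with nonzero defect, e(δ, α) ≠ 0 (an irregular root). Define the canonical weight λ_α ∈ Hom(ℤ^{Q_0}, ℤ) by λ_α(β) = e(α, β) − e(β, α). Then every λ_α-stable representation of the preprojective algebra Π_Q over ℂ with dimension vector α is isomorphic, as a representation of Π_Q, to the representation P̃_α obtained from the unique indecomposable representation P_α of Q of dimension vector α by letting all reverse arrows act as zero. In particular, up to isomorphism there is exactly one λ_α-stable Π_Q-representation of dimension vector α. -/

import Mathlib

open scoped BigOperators

/-- A finite quiver: finite sets of vertices and arrows with source and target maps. -/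
structure FinQuiver where
  V : Type
  A : Type
  [fintypeV : Fintype V]
  [fintypeA : Fintype A]
  [decEqV : DecidableEq V]
  src : A → V
  tgt : A → V

attribute [instance] FinQuiver.fintypeV FinQuiver.fintypeA FinQuiver.decEqV

namespace FinQuiver

variable (Q : FinQuiver)

/-- The Euler form of a finite quiver. -/
def eulerForm (x y : Q.V → ℤ) : ℤ :=
  (∑ i : Q.V, x i * y i) - ∑ a : Q.A, x (Q.src a) * y (Q.tgt a)

/-- The Tits form of a finite quiver. -/
def titsForm (x : Q.V → ℤ) : ℤ := Q.eulerForm x x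

/-- The quiver has no loops. -/
def NoLoops : Prop := ∀ a : Q.A, Q.src a ≠ Q.tgt a

/-- The underlying (simple) graph of a quiver without loops. -/
def graph : SimpleGraph Q.V where
  Adj i j := i ≠ j ∧ ∃ a : Q.A, (Q.src a = i ∧ Q.tgt a = j) ∨ (Q.src a = j ∧ Q.tgt a = i)
  symm := by
    constructor
    rintro i j ⟨hij, a, h⟩
    exact ⟨hij.symm, a, h.symm⟩
  loopless := by
    constructor
    rintro i ⟨hii, -⟩
    exact hii rfl

/-- The quiver has no oriented cycles. -/
def Acyclic : Prop :=
  ¬ ∃ (n : ℕ) (g : Fin (n + 1) → Q.A), ∀ k, Q.tgt (g k) = Q.src (g (k + 1))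

/-- The double quiver: for each arrow `a : i → j` add a reverse arrow `a* : j → i`. -/
def double : FinQuiver where
  V := Q.V
  A := Q.A ⊕ Q.A
  src := Sum.elim Q.src Q.tgt
  tgt := Sum.elim Q.tgt Q.src

/-- Positive roots: nonzero, nonnegative integer vectors with Tits form at most 1. -/
def PosRoot (x : Q.V → ℤ) : Prop := (∀ i, 0 ≤ x i) ∧ x ≠ 0 ∧ Q.titsForm x ≤ 1

end FinQuiver

/-- An affine quiver: connected, no loops, no oriented cycles, Tits form positive
semidefinite but not positive definite; `δ` is the minimal positive imaginary root,
generating the radical of the symmetrized Euler form. -/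
structure AffineQuiver extends FinQuiver where
  noLoops : toFinQuiver.NoLoops
  connected : toFinQuiver.graph.Connected
  acyclic : toFinQuiver.Acyclic
  posSemidef : ∀ x : V → ℤ, 0 ≤ toFinQuiver.titsForm x
  notPosDef : ∃ x : V → ℤ, x ≠ 0 ∧ toFinQuiver.titsForm x = 0
  δ : V → ℤ
  delta_pos : ∀ i, 0 < δ i
  radical_iff : ∀ x : V → ℤ,
    (∀ y : V → ℤ, toFinQuiver.eulerForm x y + toFinQuiver.eulerForm y x = 0) ↔
      ∃ m : ℤ, x = m • δ

/-- The defect `∂(x) = e(δ, x)`. -/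
def AffineQuiver.defect (Q : AffineQuiver) (x : Q.V → ℤ) : ℤ :=
  Q.eulerForm Q.δ x

/-- A finite-dimensional representation of a finite quiver over a field `k`. -/
structure QRep (Q : FinQuiver) (k : Type) [Field k] where
  carrier : Q.V → Type
  [acgI : ∀ i, AddCommGroup (carrier i)]
  [modI : ∀ i, Module k (carrier i)]
  [fdI : ∀ i, FiniteDimensional k (carrier i)]
  map : ∀ a : Q.A, carrier (Q.src a) →ₗ[k] carrier (Q.tgt a)

attribute [instance] QRep.acgI QRep.modI QRep.fdI

namespace QRep

variable {Q : FinQuiver} {k : Type} [Field k]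

/-- The dimension vector of a representation. -/
noncomputable def dimVec (X : QRep Q k) : Q.V → ℤ :=
  fun i => (Module.finrank k (X.carrier i) : ℤ)

end QRep

/-- A subrepresentation: a family of subspaces stable under all the arrow maps. -/
structure SubRep {Q : FinQuiver} {k : Type} [Field k] (X : QRep Q k) where
  mod : ∀ i, Submodule k (X.carrier i)
  stable : ∀ a : Q.A, ∀ x ∈ mod (Q.src a), X.map a x ∈ mod (Q.tgt a)

namespace SubRep

variable {Q : FinQuiver} {k : Type} [Field k] {X : QRep Q k}

/-- The dimension vector of a subrepresentation. -/
noncomputable def dimVec (U : SubRep X) : Q.V → ℤ :=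
  fun i => (Module.finrank k (U.mod i) : ℤ)

/-- The representation carried by a subrepresentation. -/
def toRep (U : SubRep X) : QRep Q k where
  carrier i := U.mod i
  map a := (X.map a).restrict (U.stable a)

end SubRep

namespace QRep

variable {Q : FinQuiver} {k : Type} [Field k]

/-- The quotient representation by a subrepresentation. -/
def quotBy (X : QRep Q k) (U : SubRep X) : QRep Q k where
  carrier i := X.carrier i ⧸ U.mod i
  map a := Submodule.mapQ _ _ (X.map a) (fun x hx => U.stable a x hx)

/-- A representation is indecomposable if it is nonzero and is not the internal direct
sum of two nonzero subrepresentations. -/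
def Indecomposable (X : QRep Q k) : Prop :=
  (∃ i, 0 < Module.finrank k (X.carrier i)) ∧
    ∀ U W : SubRep X, (∀ i, IsCompl (U.mod i) (W.mod i)) →
      (∀ i, U.mod i = ⊥) ∨ (∀ i, W.mod i = ⊥)

end QRep

/-- An isomorphism of representations of a quiver. -/
structure RepIso {Q : FinQuiver} {k : Type} [Field k] (X Y : QRep Q k) where
  equiv : ∀ i, X.carrier i ≃ₗ[k] Y.carrier i
  comm : ∀ (a : Q.A) (x : X.carrier (Q.src a)),
    equiv (Q.tgt a) (X.map a x) = Y.map a (equiv (Q.src a) x)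

section Preprojective

variable {Q : FinQuiver} {k : Type} [Field k]

/-- The endomorphism of `⊕ᵢ Xᵢ` induced by the map attached to a single arrow. -/
def arrowEnd (X : QRep Q k) (a : Q.A) :
    (∀ i, X.carrier i) →ₗ[k] (∀ i, X.carrier i) :=
  (LinearMap.single k X.carrier (Q.tgt a)).comp
    ((X.map a).comp (LinearMap.proj (Q.src a)))

/-- The preprojective relation for a representation of the double quiver:
at every vertex, `∑_{t(a)=i} X_a ∘ X_{a*} − ∑_{s(a)=i} X_{a*} ∘ X_a = 0`.
(Stated as one equation of endomorphisms of `⊕ᵢ Xᵢ`, which is equivalent since the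
`i`-component of the equation is exactly the relation at the vertex `i`.) -/
def PreprojRel (Q : FinQuiver) {k : Type} [Field k] (X : QRep Q.double k) : Prop :=
  (∑ a : Q.A, (arrowEnd X (Sum.inl a)).comp (arrowEnd X (Sum.inr a)))
    = ∑ a : Q.A, (arrowEnd X (Sum.inr a)).comp (arrowEnd X (Sum.inl a))

/-- Forget the reverse arrows: a representation of `Π_Q` gives a representation of `Q`. -/
def rho (X : QRep Q.double k) : QRep Q k where
  carrier := X.carrier
  acgI := X.acgI
  modI := X.modI
  fdI := X.fdI
  map a := X.map (Sum.inl a)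

/-- A subrepresentation of a `Π_Q`-representation is in particular a subrepresentation of
the underlying `Q`-representation. -/
def rhoSub {X : QRep Q.double k} (U : SubRep X) : SubRep (rho X) where
  mod := U.mod
  stable a x hx := U.stable (Sum.inl a) x hx

/-- A representation of the double quiver is ρ-fixed if all reverse arrows act as zero. -/
def RhoFixed (X : QRep Q.double k) : Prop :=
  ∀ a : Q.A, X.map (Sum.inr a) = 0

/-- Extend a representation of `Q` to the double quiver by letting all reverse arrows
act as zero. -/
def extendZero (P : QRep Q k) : QRep Q.double k where
  carrier := P.carrier
  acgI := P.acgI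
  modI := P.modI
  fdI := P.fdI
  map b := match b with
    | Sum.inl a => P.map a
    | Sum.inr _ => 0

end Preprojective

section SubQuot

variable {Q : FinQuiver} {k : Type} [Field k]

/-- The subquotient representation `W / U` attached to nested subrepresentations
`U ≤ W` of `Z`. -/
def subQuot (Z : QRep Q k) (U W : SubRep Z) (h : ∀ i, U.mod i ≤ W.mod i) : QRep Q k where
  carrier i := ↥(W.mod i) ⧸ (U.mod i).comap (W.mod i).subtype
  map a := Submodule.mapQ _ _ (W.toRep.map a)
    (fun x hx => U.stable a x.1 hx)

end SubQuot

/-- The canonical weight `λ_α(β) = e(α, β) − e(β, α)` attached to a root `α`. -/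
def canonicalWeight (Q : FinQuiver) (α β : Q.V → ℤ) : ℤ :=
  Q.eulerForm α β - Q.eulerForm β α

/-- `λ`-semistability and `λ`-stability of a representation of the double quiver with
respect to `Π_Q`-subrepresentations, for the weight `λ = λ_α`. -/
def LamAlphaStable {Q : FinQuiver} (α : Q.V → ℤ) (X : QRep Q.double ℂ) : Prop :=
  canonicalWeight Q α X.dimVec = 0 ∧
    (∀ U : SubRep X, canonicalWeight Q α U.dimVec ≤ 0) ∧
    ∀ U : SubRep X, (¬ ∀ i, U.mod i = ⊥) → (¬ ∀ i, U.mod i = ⊤) →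
      canonicalWeight Q α U.dimVec < 0



/-- Representations in total space form: modules over the path algebra. -/
structure TRep {V A : Type} [Fintype V] (s t : A → V) where
  E : Type
  [acg : AddCommGroup E]
  [mdl : Module ℂ E]
  [fd : FiniteDimensional ℂ E]
  ε : V → E →ₗ[ℂ] E
  φ : A → E →ₗ[ℂ] E
  idem : ∀ i x, ε i (ε i x) = ε i x
  orth : ∀ i j x, i ≠ j → ε i (ε j x) = 0
  total : ∀ x, ∑ i, ε i x = x
  left : ∀ a x, ε (t a) (φ a x) = φ a x
  right : ∀ a x, φ a (ε (s a) x) = φ a x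

attribute [instance] TRep.acg TRep.mdl TRep.fd

namespace TRep

variable {V A : Type} [Fintype V] {s t : A → V}

def IsEndo (M : TRep s t) (f : M.E →ₗ[ℂ] M.E) : Prop :=
  (∀ i x, f (M.ε i x) = M.ε i (f x)) ∧ ∀ a x, f (M.φ a x) = M.φ a (f x)

noncomputable def dim (M : TRep s t) : V → ℤ :=
  fun i => (Module.finrank ℂ (LinearMap.range (M.ε i)) : ℤ)

def Brick (M : TRep s t) : Prop :=
  Nontrivial M.E ∧ ∀ f, M.IsEndo f → ∃ c : ℂ, ∀ x, f x = c • x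

def Indec (M : TRep s t) : Prop :=
  Nontrivial M.E ∧ ∀ f, M.IsEndo f → (∀ x, f (f x) = f x) → (∀ x, f x = 0) ∨ (∀ x, f x = x)

theorem Brick.indec {M : TRep s t} (h : M.Brick) : M.Indec := by
  refine ⟨h.1, fun f hf hi => ?_⟩
  obtain ⟨c, hc⟩ := h.2 f hf
  have := h.1
  obtain ⟨x, hx⟩ := exists_ne (0 : M.E)
  have h1 := hi x
  simp only [hc, smul_smul] at h1
  have h2 : (c * c - c) • x = 0 := by rw [sub_smul, h1, sub_self]
  rcases smul_eq_zero.1 h2 with h3 | h3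
  · have h4 : c * (c - 1) = 0 := by rw [← h3]; ring
    rcases mul_eq_zero.1 h4 with h5 | h5
    · left; intro y; rw [hc, h5, zero_smul]
    · right; intro y; rw [hc, sub_eq_zero.1 h5, one_smul]
  · exact absurd h3 hx

/-- The dual representation, over the opposite quiver. -/
noncomputable def dual (M : TRep s t) : TRep t s where
  E := Module.Dual ℂ M.E
  ε i := (M.ε i).dualMap
  φ a := (M.φ a).dualMap
  idem i x := by ext y; simp [M.idem]
  orth i j x h := by ext y; simp [M.orth _ _ _ h.symm]
  total x := by
    ext y
    simp only [LinearMap.coe_sum, Finset.sum_apply, LinearMap.dualMap_apply]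
    rw [← map_sum, M.total]
  left a x := by ext y; simp [M.right]
  right a x := by ext y; simp [M.left]

theorem dim_dual (M : TRep s t) : M.dual.dim = M.dim := by
  funext i
  exact congrArg _ (LinearMap.finrank_range_dualMap_eq_finrank_range (M.ε i))

theorem eq_of_dual {E : Type} [AddCommGroup E] [Module ℂ E] {u v : E}
    (h : ∀ z : Module.Dual ℂ E, z u = z v) : u = v := by
  refine sub_eq_zero.1 ((Module.forall_dual_apply_eq_zero_iff ℂ (u - v)).1 fun z => ?_)
  rw [map_sub, h, sub_self]

theorem dual_endo (M : TRep s t) (g : Module.Dual ℂ M.E →ₗ[ℂ] Module.Dual ℂ M.E)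
    (hg : M.dual.IsEndo g) :
    ∃ f : M.E →ₗ[ℂ] M.E, M.IsEndo f ∧ ∀ (x : Module.Dual ℂ M.E) (y : M.E), g x y = x (f y) := by
  let f : M.E →ₗ[ℂ] M.E := (Module.evalEquiv ℂ M.E).symm.toLinearMap ∘ₗ
    g.dualMap ∘ₗ
      (Module.evalEquiv ℂ M.E).toLinearMap
  have hf : ∀ (x : Module.Dual ℂ M.E) (y : M.E), g x y = x (f y) := by
    intro x y
    simp only [f, LinearMap.comp_apply, LinearEquiv.coe_coe]
    rw [Module.apply_evalEquiv_symm_apply]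
    rfl
  refine ⟨f, ⟨?_, ?_⟩, hf⟩
  · intro i x
    refine eq_of_dual ?_
    intro z
    have := congrArg (fun w : Module.Dual ℂ M.E => w x) (hg.1 i z)
    change g ((M.ε i).dualMap z) x = (M.ε i).dualMap (g z) x at this
    rw [LinearMap.dualMap_apply, hf, hf, LinearMap.dualMap_apply] at this
    exact this.symm
  · intro i x
    refine eq_of_dual ?_
    intro z
    have := congrArg (fun w : Module.Dual ℂ M.E => w x) (hg.2 i z)
    change g ((M.φ i).dualMap z) x = (M.φ i).dualMap (g z) x at this
    rw [LinearMap.dualMap_apply, hf, hf, LinearMap.dualMap_apply] at this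
    exact this.symm

theorem endo_dual (M : TRep s t) (f : M.E →ₗ[ℂ] M.E) (hf : M.IsEndo f) :
    M.dual.IsEndo f.dualMap := by
  constructor
  · intro i (x : Module.Dual ℂ M.E)
    refine LinearMap.ext fun y => ?_
    change x (M.ε i (f y)) = x (f (M.ε i y))
    rw [hf.1]
  · intro i (x : Module.Dual ℂ M.E)
    refine LinearMap.ext fun y => ?_
    change x (M.φ i (f y)) = x (f (M.φ i y))
    rw [hf.2]

theorem Brick.dual {M : TRep s t} (h : M.Brick) : M.dual.Brick := by
  have := h.1
  refine ⟨inferInstanceAs (Nontrivial (Module.Dual ℂ M.E)), fun (g : Module.Dual ℂ M.E →ₗ[ℂ] Module.Dual ℂ M.E) hg => ?_⟩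
  obtain ⟨f, hf, hfg⟩ := M.dual_endo g hg
  obtain ⟨c, hc⟩ := h.2 f hf
  refine ⟨c, fun (x : Module.Dual ℂ M.E) => LinearMap.ext fun y => ?_⟩
  refine (hfg x y).trans ?_
  rw [hc, map_smul]; rfl

theorem Indec.dual {M : TRep s t} (h : M.Indec) : M.dual.Indec := by
  have := h.1
  refine ⟨inferInstanceAs (Nontrivial (Module.Dual ℂ M.E)), fun (g : Module.Dual ℂ M.E →ₗ[ℂ] Module.Dual ℂ M.E) hg hi => ?_⟩
  obtain ⟨f, hf, hfg⟩ := M.dual_endo g hg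
  have hff : ∀ x, f (f x) = f x := by
    intro x
    refine eq_of_dual ?_
    intro z
    have := congrArg (fun w : Module.Dual ℂ M.E => w x) (hi z)
    change g (g z) x = g z x at this
    rw [hfg, hfg, hfg] at this
    exact this
  rcases h.2 f hf hff with h1 | h1
  · left; intro (x : Module.Dual ℂ M.E); refine LinearMap.ext fun y => ?_
    refine (hfg x y).trans ?_
    rw [h1, map_zero]; rfl
  · right; intro (x : Module.Dual ℂ M.E); refine LinearMap.ext fun y => ?_
    refine (hfg x y).trans ?_
    rw [h1]

theorem brick_of_dual {M : TRep s t} (h : M.dual.Brick) : M.Brick := by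
  have h1 : Nontrivial (Module.Dual ℂ M.E) := h.1
  refine ⟨?_, fun f hf => ?_⟩
  · by_contra hn
    rw [not_nontrivial_iff_subsingleton] at hn
    obtain ⟨x, hx⟩ := exists_ne (0 : Module.Dual ℂ M.E)
    exact hx (LinearMap.ext fun y => by rw [Subsingleton.elim y 0, map_zero, map_zero])
  · obtain ⟨c, hc⟩ := h.2 _ (M.endo_dual f hf)
    refine ⟨c, fun x => ?_⟩
    refine eq_of_dual ?_
    intro z
    have := congrArg (fun w : Module.Dual ℂ M.E => w x) (hc z)
    change z (f x) = c • z x at this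
    rw [map_smul, this]

end TRep

/-- The claim: every indecomposable of dimension `α` is a brick and a brick exists. -/
def TClaim {V A : Type} [Fintype V] (s t : A → V) (α : V → ℤ) : Prop :=
  (∀ M : TRep s t, M.Indec → M.dim = α → M.Brick) ∧ ∃ M : TRep s t, M.Brick ∧ M.dim = α

theorem TClaim.dual {V A : Type} [Fintype V] {s t : A → V} {α : V → ℤ} (h : TClaim s t α) :
    TClaim t s α := by
  refine ⟨fun M hM hd => ?_, ?_⟩
  · exact TRep.brick_of_dual (h.1 M.dual hM.dual (by rw [TRep.dim_dual, hd]))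
  · obtain ⟨M, hM, hd⟩ := h.2
    exact ⟨M.dual, hM.dual, by rw [TRep.dim_dual, hd]⟩

set_option linter.all false

namespace TRep

variable {V A : Type} [Fintype V] [DecidableEq V] [Fintype A] {s t : A → V}

/-- Underlying space of the reflection at a sink. -/
def reflSub (M : TRep s t) (i : V) : Submodule ℂ (M.E × (A → M.E)) where
  carrier := {p | M.ε i p.1 = 0 ∧ (∀ a, t a ≠ i → p.2 a = 0) ∧
    (∀ a, M.ε (s a) (p.2 a) = p.2 a) ∧ ∑ a, M.φ a (p.2 a) = 0}
  add_mem' := by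
    rintro p q ⟨h1, h2, h3, h4⟩ ⟨k1, k2, k3, k4⟩
    refine ⟨by simp [h1, k1], fun a ha => by simp [h2 a ha, k2 a ha],
      fun a => by simp [h3 a, k3 a], by simp [Finset.sum_add_distrib, h4, k4]⟩
  zero_mem' := by simp
  smul_mem' := by
    rintro c p ⟨h1, h2, h3, h4⟩
    refine ⟨by simp [h1], fun a ha => by simp [h2 a ha],
      fun a => by simp [h3 a], by simp [← Finset.smul_sum, h4]⟩

theorem mem_reflSub {M : TRep s t} {i : V} {p : M.E × (A → M.E)} :
    p ∈ M.reflSub i ↔ M.ε i p.1 = 0 ∧ (∀ a, t a ≠ i → p.2 a = 0) ∧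
    (∀ a, M.ε (s a) (p.2 a) = p.2 a) ∧ ∑ a, M.φ a (p.2 a) = 0 := Iff.rfl

def reflEps (M : TRep s t) (i j : V) : M.E × (A → M.E) →ₗ[ℂ] M.E × (A → M.E) :=
  if j = i then LinearMap.prod 0 (LinearMap.snd ℂ _ _)
  else LinearMap.prod (M.ε j ∘ₗ LinearMap.fst ℂ _ _) 0

theorem reflEps_self (M : TRep s t) (i : V) (p : M.E × (A → M.E)) :
    M.reflEps i i p = (0, p.2) := by simp [reflEps]

theorem reflEps_ne (M : TRep s t) {i j : V} (h : j ≠ i) (p : M.E × (A → M.E)) :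
    M.reflEps i j p = (M.ε j p.1, 0) := by simp [reflEps, h]

def reflPhi (M : TRep s t) (i : V) (a : A) : M.E × (A → M.E) →ₗ[ℂ] M.E × (A → M.E) :=
  if t a = i then LinearMap.prod (LinearMap.proj a ∘ₗ LinearMap.snd ℂ _ _) 0
  else LinearMap.prod (M.φ a ∘ₗ LinearMap.fst ℂ _ _) 0

theorem reflPhi_eq (M : TRep s t) {i : V} {a : A} (h : t a = i) (p : M.E × (A → M.E)) :
    M.reflPhi i a p = (p.2 a, 0) := by simp [reflPhi, h]

theorem reflPhi_ne (M : TRep s t) {i : V} {a : A} (h : t a ≠ i) (p : M.E × (A → M.E)) :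
    M.reflPhi i a p = (M.φ a p.1, 0) := by simp [reflPhi, h]

theorem mem_left {M : TRep s t} {i : V} {x : M.E} (hx : M.ε i x = 0) :
    ((x, 0) : M.E × (A → M.E)) ∈ M.reflSub i := by
  rw [mem_reflSub]; simp [hx]

theorem eps_phi_ne (M : TRep s t) {i : V} {a : A} (h : t a ≠ i) (x : M.E) :
    M.ε i (M.φ a x) = 0 := by
  rw [← M.left, M.orth _ _ _ h.symm]

theorem phi_eps_ne (M : TRep s t) {i : V} {a : A} (h : s a ≠ i) (x : M.E) :
    M.φ a (M.ε i x) = 0 := by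
  rw [← M.right, M.orth _ _ _ h, map_zero]

theorem reflEps_mem (M : TRep s t) (i j : V) :
    ∀ p ∈ M.reflSub i, M.reflEps i j p ∈ M.reflSub i := by
  rintro p ⟨h1, h2, h3, h4⟩
  by_cases h : j = i
  · subst h
    rw [reflEps_self]
    exact ⟨by simp, h2, h3, h4⟩
  · rw [reflEps_ne _ h]
    exact mem_left (M.orth _ _ _ (Ne.symm h))

theorem reflPhi_mem (M : TRep s t) (i : V) (hs : ∀ a, s a ≠ i) (a : A) :
    ∀ p ∈ M.reflSub i, M.reflPhi i a p ∈ M.reflSub i := by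
  rintro p ⟨h1, h2, h3, h4⟩
  by_cases h : t a = i
  · rw [reflPhi_eq _ h]
    refine mem_left ?_
    rw [← h3, M.orth _ _ _ (hs a).symm]
  · rw [reflPhi_ne _ h]
    exact mem_left (M.eps_phi_ne h _)

theorem sum_ne (M : TRep s t) (i : V) (x : M.E) :
    ∑ j ∈ Finset.univ.erase i, M.ε j x = x - M.ε i x := by
  have := M.total x
  rw [← Finset.add_sum_erase _ _ (Finset.mem_univ i)] at this
  rw [eq_sub_iff_add_eq, add_comm, this]

/-- The reflection of a representation at a sink. -/
def refl (M : TRep s t) (i : V) (hs : ∀ a, s a ≠ i) (s' t' : A → V)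
    (h1 : ∀ a, t a = i → s' a = i ∧ t' a = s a) (h2 : ∀ a, t a ≠ i → s' a = s a ∧ t' a = t a) :
    TRep s' t' where
  E := M.reflSub i
  ε j := (M.reflEps i j).restrict (M.reflEps_mem i j)
  φ a := (M.reflPhi i a).restrict (M.reflPhi_mem i hs a)
  idem j p := by
    apply Subtype.ext
    by_cases h : j = i
    · subst h; simp [reflEps_self]
    · simp [reflEps_ne _ h, M.idem]
  orth j k p hjk := by
    apply Subtype.ext
    by_cases h : j = i
    · subst h; simp [reflEps_self, reflEps_ne _ hjk.symm]
    · by_cases h' : k = i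
      · subst h'; simp [reflEps_self, reflEps_ne _ h]
      · simp [reflEps_ne _ h, reflEps_ne _ h', M.orth _ _ _ hjk]
  total p := by
    apply Subtype.ext
    rw [AddSubmonoidClass.coe_finsetSum, ← Finset.add_sum_erase _ _ (Finset.mem_univ i)]
    have : ∀ j ∈ Finset.univ.erase i, (((M.reflEps i j).restrict (M.reflEps_mem i j) p :
        M.reflSub i) : M.E × (A → M.E)) = LinearMap.inl ℂ _ _ (M.ε j p.1.1) := by
      intro j hj
      rw [LinearMap.coe_restrict_apply, reflEps_ne _ (Finset.ne_of_mem_erase hj)]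
      rfl
    rw [Finset.sum_congr rfl this, ← map_sum, sum_ne, p.2.1, sub_zero,
      LinearMap.coe_restrict_apply, reflEps_self]
    simp
  left a p := by
    apply Subtype.ext
    obtain ⟨k1, k2, k3, k4⟩ := p.2
    by_cases h : t a = i
    · simp only [LinearMap.coe_restrict_apply]
      rw [(h1 a h).2, reflPhi_eq _ h, reflEps_ne _ (hs a), k3]
    · simp only [LinearMap.coe_restrict_apply]
      rw [(h2 a h).2, reflPhi_ne _ h, reflEps_ne _ h, M.left]
  right a p := by
    apply Subtype.ext
    obtain ⟨k1, k2, k3, k4⟩ := p.2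
    by_cases h : t a = i
    · simp only [LinearMap.coe_restrict_apply]
      rw [(h1 a h).1, reflPhi_eq _ h, reflPhi_eq _ h, reflEps_self]
    · simp only [LinearMap.coe_restrict_apply]
      rw [(h2 a h).1, reflPhi_ne _ h, reflPhi_ne _ h, reflEps_ne _ (hs a), M.right]

/-- Surjectivity at the sink `i`. -/
def SurjAt (M : TRep s t) (i : V) : Prop :=
  ∀ x, ∃ y : A → M.E, (∀ a, t a ≠ i → y a = 0) ∧ (∀ a, M.ε (s a) (y a) = y a) ∧
    ∑ a, M.φ a (y a) = M.ε i x

theorem surjAt_of_indec (M : TRep s t) (hM : M.Indec) (i : V) (hs : ∀ a, s a ≠ i)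
    (hd : ∃ j, j ≠ i ∧ M.dim j ≠ 0) : M.SurjAt i := by
  classical
  let H : (A → M.E) →ₗ[ℂ] M.E := ∑ a, if t a = i then M.φ a ∘ₗ LinearMap.proj a else 0
  have hH : ∀ y, H y = ∑ a, if t a = i then M.φ a (y a) else 0 := by
    intro y
    simp only [H, LinearMap.coe_sum, Finset.sum_apply]
    refine Finset.sum_congr rfl fun a _ => ?_
    split_ifs <;> rfl
  obtain ⟨π, hπ⟩ := Submodule.exists_isCompl (LinearMap.range H)
  let P : M.E →ₗ[ℂ] M.E := (LinearMap.range H).subtype ∘ₗ Submodule.projectionOnto _ _ hπ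
  have hP1 : ∀ x, ∃ y, P x = H y := fun x => by
    obtain ⟨y, hy⟩ := (Submodule.projectionOnto _ _ hπ x).2
    exact ⟨y, hy.symm⟩
  have hP2 : ∀ y, P (H y) = H y := fun y => by
    have := Submodule.projectionOnto_apply_left hπ ⟨H y, ⟨y, rfl⟩⟩
    exact congrArg Subtype.val this
  have hεH : ∀ y, M.ε i (H y) = H y := by
    intro y
    rw [hH, map_sum]
    refine Finset.sum_congr rfl fun a _ => ?_
    split_ifs with h
    · rw [← h, M.left]
    · simp
  have hεP : ∀ x, M.ε i (P x) = P x := fun x => by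
    obtain ⟨y, hy⟩ := hP1 x
    rw [hy, hεH]
  have hPφ : ∀ a x, t a = i → P (M.φ a x) = M.φ a x := by
    intro a x h
    have : M.φ a x = H (Pi.single a x) := by
      rw [hH, Finset.sum_eq_single a]
      · simp [h]
      · intro b _ hb; simp [hb]
      · simp
    rw [this, hP2]
  let f : M.E →ₗ[ℂ] M.E := LinearMap.id - M.ε i + P ∘ₗ M.ε i
  have hf : ∀ x, f x = x - M.ε i x + P (M.ε i x) := fun x => rfl
  have hε : ∀ j x, j ≠ i → M.ε j (P x) = 0 := fun j x h => by rw [← hεP, M.orth _ _ _ h]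
  have hfe : M.IsEndo f := by
    constructor
    · intro j x
      by_cases h : j = i
      · subst h
        simp [hf, M.idem, hεP]
      · simp [hf, hε _ _ h, M.orth _ _ _ h, M.orth _ _ _ (Ne.symm h)]
    · intro a x
      have e1 : M.φ a (P (M.ε i x)) = 0 := by rw [← hεP, M.phi_eps_ne (hs a)]
      rw [hf, hf, map_add, map_sub, M.phi_eps_ne (hs a), e1]
      by_cases h : t a = i
      · have e2 : M.ε i (M.φ a x) = M.φ a x := by rw [← h, M.left]
        rw [e2, hPφ _ _ h]; simp
      · rw [M.eps_phi_ne h]; simp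
  have hff : ∀ x, f (f x) = f x := by
    intro x
    have : M.ε i (f x) = P (M.ε i x) := by rw [hf]; simp [M.idem, hεP]
    obtain ⟨y, hy⟩ := hP1 (M.ε i x)
    rw [hf (f x), this, hy, hP2]; simp
  rcases hM.2 f hfe hff with h0 | h1
  · exfalso
    obtain ⟨j, hj, hjd⟩ := hd
    apply hjd
    have : M.ε j = 0 := by
      ext x
      have := h0 (M.ε j x)
      rw [hf, M.orth _ _ _ (Ne.symm hj)] at this
      simpa using this
    simp [dim, this]
  · intro x
    obtain ⟨y, hy⟩ := hP1 (M.ε i x)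
    have h3 : M.ε i x = H y := by
      have h2 := h1 x
      rw [hf, hy] at h2
      rw [← sub_eq_zero, ← neg_eq_zero]
      rw [← sub_eq_zero] at h2
      rw [← h2]; abel
    refine ⟨fun a => if t a = i then M.ε (s a) (y a) else 0, ?_, ?_, ?_⟩
    · intro a h; simp [h]
    · intro a
      dsimp only
      split_ifs
      · rw [M.idem]
      · simp
    · rw [h3, hH]
      refine Finset.sum_congr rfl fun a _ => ?_
      dsimp only
      split_ifs
      · rw [M.right]
      · simp

section
variable (M : TRep s t) (i : V) (hs : ∀ a, s a ≠ i) (s' t' : A → V)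
    (h1 : ∀ a, t a = i → s' a = i ∧ t' a = s a) (h2 : ∀ a, t a ≠ i → s' a = s a ∧ t' a = t a)

theorem endo_ext (hsurj : M.SurjAt i) (hs : ∀ a, s a ≠ i) {f g : M.E →ₗ[ℂ] M.E}
    (hf : M.IsEndo f) (hg : M.IsEndo g) (h : ∀ x, M.ε i x = 0 → f x = g x) : ∀ x, f x = g x := by
  intro x
  have e : x = (x - M.ε i x) + M.ε i x := by abel
  rw [e, map_add, map_add, h (x - M.ε i x) (by simp [M.idem])]
  congr 1
  obtain ⟨y, -, hy2, hy3⟩ := hsurj x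
  rw [← hy3, map_sum, map_sum]
  refine Finset.sum_congr rfl fun a _ => ?_
  rw [hf.2, hg.2, h]
  rw [← hy2, M.orth _ _ _ (hs a).symm]

theorem refl_isEndo_iff (g : M.reflSub i →ₗ[ℂ] M.reflSub i) :
    (M.refl i hs s' t' h1 h2).IsEndo g ↔
      (∀ j p, (g ⟨M.reflEps i j p.1, M.reflEps_mem i j _ p.2⟩).1 = M.reflEps i j (g p).1) ∧
      (∀ a p, (g ⟨M.reflPhi i a p.1, M.reflPhi_mem i hs a _ p.2⟩).1 = M.reflPhi i a (g p).1) := by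
  constructor
  · rintro ⟨k1, k2⟩
    exact ⟨fun j p => congrArg Subtype.val (k1 j p), fun a p => congrArg Subtype.val (k2 a p)⟩
  · rintro ⟨k1, k2⟩
    exact ⟨fun j p => Subtype.ext (k1 j p), fun a p => Subtype.ext (k2 a p)⟩

theorem refl_restrict {f : M.E →ₗ[ℂ] M.E} (hf : M.IsEndo f) :
    ∃ g : M.reflSub i →ₗ[ℂ] M.reflSub i, (M.refl i hs s' t' h1 h2).IsEndo g ∧
      ∀ p : M.reflSub i, (g p).1 = (f p.1.1, fun a => f (p.1.2 a)) := by
  have hm : ∀ p ∈ M.reflSub i, (LinearMap.prodMap f (f.compLeft A)) p ∈ M.reflSub i := by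
    rintro p ⟨k1, k2, k3, k4⟩
    refine ⟨?_, ?_, ?_, ?_⟩
    · simp [← hf.1, k1]
    · intro a ha; simp [k2 a ha]
    · intro a; simp [← hf.1, k3 a]
    · simp [← hf.2, ← map_sum, k4]
  refine ⟨(LinearMap.prodMap f (f.compLeft A)).restrict hm, ?_, fun p => rfl⟩
  rw [refl_isEndo_iff]
  constructor
  · intro j p
    simp only [LinearMap.coe_restrict_apply]
    by_cases h : j = i
    · subst h
      rw [reflEps_self, reflEps_self]
      ext <;> simp
    · rw [reflEps_ne _ h, reflEps_ne _ h]
      ext <;> simp [hf.1]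
  · intro a p
    simp only [LinearMap.coe_restrict_apply]
    by_cases h : t a = i
    · rw [reflPhi_eq _ h, reflPhi_eq _ h]
      ext <;> simp
    · rw [reflPhi_ne _ h, reflPhi_ne _ h]
      ext <;> simp [hf.2]

/-- The map into the sink. -/
def sinkMap : (A → M.E) →ₗ[ℂ] M.E := ∑ a, if t a = i then M.φ a ∘ₗ LinearMap.proj a else 0

theorem sinkMap_apply (y : A → M.E) :
    M.sinkMap i y = ∑ a, if t a = i then M.φ a (y a) else 0 := by
  simp only [sinkMap, LinearMap.coe_sum, Finset.sum_apply]
  refine Finset.sum_congr rfl fun a _ => ?_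
  split_ifs <;> rfl

theorem sinkMap_of (y : A → M.E) (hy : ∀ a, t a ≠ i → y a = 0) :
    M.sinkMap i y = ∑ a, M.φ a (y a) := by
  rw [sinkMap_apply]
  refine Finset.sum_congr rfl fun a _ => ?_
  split_ifs with h
  · rfl
  · rw [hy a h, map_zero]

theorem eps_sinkMap (y : A → M.E) : M.ε i (M.sinkMap i y) = M.sinkMap i y := by
  rw [sinkMap_apply, map_sum]
  refine Finset.sum_congr rfl fun a _ => ?_
  split_ifs with h
  · rw [← h, M.left]
  · simp

theorem exists_section (hsurj : M.SurjAt i) : ∃ σ : M.E →ₗ[ℂ] (A → M.E),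
    (∀ x, M.sinkMap i (σ x) = M.ε i x) ∧ (∀ x a, t a ≠ i → σ x a = 0) ∧
    (∀ x a, M.ε (s a) (σ x a) = σ x a) ∧ (∀ x, M.ε i x = 0 → σ x = 0) ∧
    (∀ x, σ (M.ε i x) = σ x) := by
  classical
  obtain ⟨r, hr⟩ := LinearMap.exists_rightInverse_of_surjective (M.sinkMap i).rangeRestrict
    (LinearMap.range_eq_top.2 (LinearMap.surjective_rangeRestrict _))
  obtain ⟨ρ, hρ⟩ := LinearMap.exists_extend r
  let N : (A → M.E) →ₗ[ℂ] (A → M.E) :=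
    LinearMap.pi fun a => if t a = i then M.ε (s a) ∘ₗ LinearMap.proj a else 0
  have hN1 : ∀ y a, t a = i → N y a = M.ε (s a) (y a) := by
    intro y a h
    simp [N, h]
  have hN2 : ∀ y a, t a ≠ i → N y a = 0 := by
    intro y a h
    simp [N, h]
  have hHN : ∀ y, M.sinkMap i (N y) = M.sinkMap i y := by
    intro y
    rw [sinkMap_apply, sinkMap_apply]
    refine Finset.sum_congr rfl fun a _ => ?_
    split_ifs with h
    · rw [hN1 _ _ h, M.right]
    · rfl
  refine ⟨N ∘ₗ ρ ∘ₗ M.ε i, ?_, ?_, ?_, ?_, ?_⟩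
  · intro x
    simp only [LinearMap.comp_apply]
    rw [hHN]
    obtain ⟨y, hy1, -, hy⟩ := hsurj x
    have hx : M.ε i x = M.sinkMap i y := by rw [sinkMap_of _ _ _ hy1, hy]
    have h3 : ρ (M.sinkMap i y) = r ⟨M.sinkMap i y, ⟨y, rfl⟩⟩ := by rw [← hρ]; rfl
    rw [hx, h3]
    have := congrArg Subtype.val (LinearMap.congr_fun hr ⟨M.sinkMap i y, ⟨y, rfl⟩⟩)
    exact this
  · intro x a h
    exact hN2 _ _ h
  · intro x a
    by_cases h : t a = i
    · simp only [LinearMap.comp_apply]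
      rw [hN1 _ _ h, M.idem]
    · simp only [LinearMap.comp_apply]
      rw [hN2 _ _ h, map_zero]
  · intro x hx
    simp [hx]
  · intro x
    simp [M.idem]

theorem refl_lift (hsurj : M.SurjAt i) (g : M.reflSub i →ₗ[ℂ] M.reflSub i)
    (hg : (M.refl i hs s' t' h1 h2).IsEndo g) :
    ∃ f : M.E →ₗ[ℂ] M.E, M.IsEndo f ∧
      ∀ p : M.reflSub i, (g p).1 = (f p.1.1, fun a => f (p.1.2 a)) := by
  classical
  rw [refl_isEndo_iff] at hg
  obtain ⟨hg1, hg2⟩ := hg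
  have hker : ∀ x, M.ε i (x - M.ε i x) = 0 := fun x => by simp [M.idem]
  let inc : M.E →ₗ[ℂ] M.reflSub i := LinearMap.codRestrict (M.reflSub i)
    (LinearMap.inl ℂ _ _ ∘ₗ (LinearMap.id - M.ε i)) (fun x => mem_left (hker x))
  have hinc : ∀ x, (inc x).1 = (x - M.ε i x, 0) := fun x => rfl
  let g1 : M.E →ₗ[ℂ] M.E := LinearMap.fst ℂ _ _ ∘ₗ (M.reflSub i).subtype ∘ₗ g ∘ₗ inc
  have hg1e : ∀ x, g1 x = (g (inc x)).1.1 := fun x => rfl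
  have hg1d : ∀ x (hx : M.ε i x = 0), g1 x = (g ⟨(x, 0), mem_left hx⟩).1.1 := by
    intro x hx
    have : inc x = ⟨(x, 0), mem_left hx⟩ := by
      apply Subtype.ext
      rw [hinc, hx, sub_zero]
    rw [hg1e, this]
  have hg10 : ∀ x, g1 (M.ε i x) = 0 := by
    intro x
    have : inc (M.ε i x) = 0 := by
      apply Subtype.ext
      rw [hinc, M.idem, sub_self]
      rfl
    rw [hg1e, this, map_zero]
    rfl
  have k4 : ∀ x, M.ε i (g1 x) = 0 := fun x => (g _).2.1
  have k1 : ∀ x (hx : M.ε i x = 0), (g ⟨(x, 0), mem_left hx⟩).1 = (g1 x, 0) := by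
    intro x hx
    have := hg1 i ⟨(x, 0), mem_left hx⟩
    have e : (⟨M.reflEps i i (x, 0), M.reflEps_mem i i _ (mem_left hx)⟩ : M.reflSub i) = 0 := by
      apply Subtype.ext
      simp [reflEps_self]
    rw [e, map_zero, reflEps_self] at this
    rw [hg1d x hx]
    ext1
    · rfl
    · exact (congrArg Prod.snd this).symm
  have k2 : ∀ y (hy : ((0, y) : M.E × (A → M.E)) ∈ M.reflSub i),
      (g ⟨(0, y), hy⟩).1 = (0, fun a => g1 (y a)) := by
    intro y hy
    have e1 : (g ⟨(0, y), hy⟩).1.1 = 0 := by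
      have := hg1 i ⟨(0, y), hy⟩
      have e : (⟨M.reflEps i i (0, y), M.reflEps_mem i i _ hy⟩ : M.reflSub i) = ⟨(0, y), hy⟩ := by
        apply Subtype.ext
        simp [reflEps_self]
      rw [e, reflEps_self] at this
      exact congrArg Prod.fst this
    ext1
    · exact e1
    · funext a
      by_cases h : t a = i
      · have hy0 : M.ε i (y a) = 0 := by
          have := hy.2.2.1 a
          dsimp only at this
          rw [← this, M.orth _ _ _ (hs a).symm]
        have := hg2 a ⟨(0, y), hy⟩
        have e : (⟨M.reflPhi i a (0, y), M.reflPhi_mem i hs a _ hy⟩ : M.reflSub i) =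
            ⟨(y a, 0), mem_left hy0⟩ := by
          apply Subtype.ext
          simp [reflPhi_eq _ h]
        rw [e, reflPhi_eq _ h, k1 _ hy0] at this
        exact (congrArg Prod.fst this).symm
      · have := hy.2.1 a h
        dsimp only at this ⊢
        rw [this, map_zero]
        exact (g _).2.2.1 a h
  have k3 : ∀ p : M.reflSub i, (g p).1 = (g1 p.1.1, fun a => g1 (p.1.2 a)) := by
    rintro ⟨⟨x, y⟩, hp⟩
    have hx : M.ε i x = 0 := hp.1
    have hy : ((0, y) : M.E × (A → M.E)) ∈ M.reflSub i := by
      exact ⟨by simp, hp.2⟩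
    have e : (⟨(x, y), hp⟩ : M.reflSub i) = ⟨(x, 0), mem_left hx⟩ + ⟨(0, y), hy⟩ := by
      apply Subtype.ext
      simp
    rw [e, map_add, Submodule.coe_add, k1 x hx, k2 y hy]
    simp
  have hdec : ∀ x, g1 x = g1 (x - M.ε i x) := fun x => by rw [map_sub, hg10, sub_zero]
  have k5 : ∀ j x, j ≠ i → g1 (M.ε j x) = M.ε j (g1 x) := by
    intro j x hj
    have h3 := hg1 j ⟨(x - M.ε i x, 0), mem_left (hker x)⟩
    rw [k3, k3] at h3
    have h4 := congrArg Prod.fst h3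
    simp only [reflEps_ne _ hj] at h4
    rw [← hdec, map_sub, M.orth _ _ _ hj, sub_zero] at h4
    exact h4
  have k6 : ∀ a x, t a ≠ i → g1 (M.φ a x) = M.φ a (g1 x) := by
    intro a x h
    have h3 := hg2 a ⟨(x - M.ε i x, 0), mem_left (hker x)⟩
    rw [k3, k3] at h3
    have h4 := congrArg Prod.fst h3
    simp only [reflPhi_ne _ h] at h4
    rw [← hdec, map_sub, M.phi_eps_ne (hs a), sub_zero] at h4
    exact h4
  have k7 : ∀ y (hy : ((0, y) : M.E × (A → M.E)) ∈ M.reflSub i),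
      M.sinkMap i (fun a => g1 (y a)) = 0 := by
    intro y hy
    have h3 := (g ⟨(0, y), hy⟩).2
    rw [k2, mem_reflSub] at h3
    rw [sinkMap_of]
    · exact h3.2.2.2
    · exact h3.2.1
  obtain ⟨σ, hσ1, hσ2, hσ3, hσ4, hσ5⟩ := M.exists_section i hsurj
  let f : M.E →ₗ[ℂ] M.E := g1 + M.sinkMap i ∘ₗ g1.compLeft A ∘ₗ σ
  have hf : ∀ x, f x = g1 x + M.sinkMap i (fun a => g1 (σ x a)) := fun x => rfl
  have hf0 : ∀ x, M.ε i x = 0 → f x = g1 x := by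
    intro x hx
    rw [hf, hσ4 x hx]
    have : (fun a => g1 ((0 : A → M.E) a)) = 0 := by funext a; simp
    rw [this, map_zero, add_zero]
  have hφS : ∀ a y, M.φ a (M.sinkMap i y) = 0 := by
    intro a y
    rw [← eps_sinkMap, M.phi_eps_ne (hs a)]
  refine ⟨f, ⟨?_, ?_⟩, ?_⟩
  · intro j x
    by_cases h : j = i
    · subst h
      rw [hf, hf, hg10, map_add, k4, eps_sinkMap, hσ5]
    · rw [hf0 _ (M.orth _ _ _ (Ne.symm h)), hf, map_add, k5 _ _ h, ← eps_sinkMap, M.orth _ _ _ h,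
        add_zero]
  · intro a x
    rw [hf x, map_add, hφS, add_zero]
    by_cases h : t a = i
    · have e1 : M.ε i (M.φ a x) = M.φ a x := by rw [← h, M.left]
      rw [hf, ← e1, hg10, zero_add, e1]
      have e2 : M.sinkMap i (Pi.single a (M.ε (s a) x)) = M.φ a x := by
        rw [sinkMap_apply, Finset.sum_eq_single a]
        · simp [h, M.right]
        · intro b _ hb; simp [hb]
        · simp
      have e3 : M.sinkMap i (Pi.single a (g1 (M.ε (s a) x))) = M.φ a (g1 x) := by
        rw [sinkMap_apply, Finset.sum_eq_single a]
        · simp [h, M.right, k5 _ _ (hs a)]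
        · intro b _ hb; simp [hb]
        · simp
      have hz : ∀ b, t b ≠ i → (σ (M.φ a x) - Pi.single a (M.ε (s a) x) : A → M.E) b = 0 := by
        intro b hb
        have : b ≠ a := fun hba => hb (hba ▸ h)
        simp [hσ2 _ _ hb, this]
      have hK : ((0, σ (M.φ a x) - Pi.single a (M.ε (s a) x)) : M.E × (A → M.E)) ∈ M.reflSub i := by
        refine ⟨by simp, hz, ?_, ?_⟩
        · intro b
          by_cases hb : b = a
          · subst hb; simp [hσ3, M.idem]
          · simp [hσ3, hb]
        · have := M.sinkMap_of i _ hz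
          dsimp only
          rw [← this, map_sub, hσ1, e2, e1, sub_self]
      have h7 := k7 _ hK
      have e4 : (fun b => g1 ((σ (M.φ a x) - Pi.single a (M.ε (s a) x) : A → M.E) b)) =
          (fun b => g1 (σ (M.φ a x) b)) - Pi.single a (g1 (M.ε (s a) x)) := by
        funext b
        by_cases hb : b = a
        · subst hb; simp
        · simp [hb]
      rw [e4, map_sub, e3, sub_eq_zero] at h7
      exact h7
    · rw [hf0 _ (M.eps_phi_ne h x), k6 _ _ h]
  · intro p
    rw [k3]
    obtain ⟨q1, q2, q3, q4⟩ := p.2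
    rw [hf0 _ q1]
    ext1
    · rfl
    · funext a
      refine (hf0 _ ?_).symm
      rw [← q3, M.orth _ _ _ (hs a).symm]

theorem refl_nontrivial (hd : ∃ j, j ≠ i ∧ M.dim j ≠ 0) :
    ∃ p : M.reflSub i, p ≠ 0 := by
  obtain ⟨j, hj, hjd⟩ := hd
  by_contra! h
  apply hjd
  have : M.ε j = 0 := by
    ext x
    have := h ⟨(M.ε j x, 0), mem_left (M.orth _ _ _ (Ne.symm hj))⟩
    exact congrArg (fun p : M.reflSub i => p.1.1) this
  simp [dim, this]

theorem refl_indec (hM : M.Indec) (hd : ∃ j, j ≠ i ∧ M.dim j ≠ 0) :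
    (M.refl i hs s' t' h1 h2).Indec := by
  have hsurj := M.surjAt_of_indec hM i hs hd
  obtain ⟨p, hp⟩ := M.refl_nontrivial i hd
  refine ⟨⟨p, (0 : M.reflSub i), hp⟩, ?_⟩
  intro (g : M.reflSub i →ₗ[ℂ] M.reflSub i) hg hgg
  obtain ⟨f, hf, hfg⟩ := M.refl_lift i hs s' t' h1 h2 hsurj g hg
  have hff : ∀ x, f (f x) = f x := by
    have hf2 : M.IsEndo (f ∘ₗ f) := by
      constructor
      · intro j x; simp [hf.1]
      · intro j x; simp [hf.2]
    refine M.endo_ext i hsurj hs hf2 hf ?_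
    intro x hx
    have h3 : (g (g ⟨(x, 0), mem_left hx⟩)).1 = (g ⟨(x, 0), mem_left hx⟩).1 :=
      congrArg Subtype.val (hgg _)
    rw [hfg, hfg] at h3
    exact congrArg Prod.fst h3
  rcases hM.2 f hf hff with h | h
  · left
    intro (q : M.reflSub i)
    refine Subtype.ext ((hfg q).trans ?_)
    simp only [h]
    rfl
  · right
    intro (q : M.reflSub i)
    refine Subtype.ext ((hfg q).trans ?_)
    simp only [h]

theorem refl_brick (hM : M.Brick) (hd : ∃ j, j ≠ i ∧ M.dim j ≠ 0) :
    (M.refl i hs s' t' h1 h2).Brick := by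
  have hsurj := M.surjAt_of_indec hM.indec i hs hd
  obtain ⟨p, hp⟩ := M.refl_nontrivial i hd
  refine ⟨⟨p, (0 : M.reflSub i), hp⟩, ?_⟩
  intro (g : M.reflSub i →ₗ[ℂ] M.reflSub i) hg
  obtain ⟨f, hf, hfg⟩ := M.refl_lift i hs s' t' h1 h2 hsurj g hg
  obtain ⟨c, hc⟩ := hM.2 f hf
  refine ⟨c, fun (q : M.reflSub i) => Subtype.ext ((hfg q).trans ?_)⟩
  simp only [hc]
  rfl

theorem brick_of_refl (hM : M.Indec) (hd : ∃ j, j ≠ i ∧ M.dim j ≠ 0)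
    (hR : (M.refl i hs s' t' h1 h2).Brick) : M.Brick := by
  have hsurj := M.surjAt_of_indec hM i hs hd
  refine ⟨hM.1, fun f hf => ?_⟩
  obtain ⟨g, hg, hfg⟩ := M.refl_restrict i hs s' t' h1 h2 hf
  obtain ⟨c, hc⟩ := hR.2 g hg
  refine ⟨c, ?_⟩
  have hce : M.IsEndo (c • LinearMap.id) := by
    constructor <;> (intros; simp)
  refine M.endo_ext i hsurj hs hf hce ?_
  intro x hx
  have h3 : (g ⟨(x, 0), mem_left hx⟩).1 = c • (x, 0) := congrArg Subtype.val (hc _)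
  rw [hfg] at h3
  exact congrArg Prod.fst h3

theorem refl_dim_ne {j : V} (hj : j ≠ i) : (M.refl i hs s' t' h1 h2).dim j = M.dim j := by
  let r : M.reflSub i →ₗ[ℂ] M.reflSub i := (M.reflEps i j).restrict (M.reflEps_mem i j)
  change ((Module.finrank ℂ (LinearMap.range r) : ℕ) : ℤ) = _
  let inc : M.E →ₗ[ℂ] M.reflSub i := LinearMap.codRestrict (M.reflSub i)
    (LinearMap.inl ℂ _ _ ∘ₗ M.ε j) (fun x => mem_left (M.orth _ _ _ (Ne.symm hj)))
  have hinc : ∀ x, (inc x).1 = (M.ε j x, 0) := fun x => rfl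
  have hr' : ∀ p, (r p).1 = M.reflEps i j p.1 := fun p => rfl
  have hr : LinearMap.range r = LinearMap.range inc := by
    apply le_antisymm
    · rintro _ ⟨p, rfl⟩
      refine ⟨p.1.1, Subtype.ext ?_⟩
      rw [hinc, hr', reflEps_ne _ hj]
    · rintro _ ⟨x, rfl⟩
      refine ⟨inc x, Subtype.ext ?_⟩
      rw [hr', hinc, reflEps_ne _ hj, M.idem]
  have hk : LinearMap.ker inc = LinearMap.ker (M.ε j) := by
    ext x
    simp only [LinearMap.mem_ker]
    constructor
    · intro h
      exact congrArg (fun p : M.reflSub i => p.1.1) h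
    · intro h
      apply Subtype.ext
      rw [hinc, h]
      rfl
  have e1 := LinearMap.finrank_range_add_finrank_ker inc
  have e2 := LinearMap.finrank_range_add_finrank_ker (M.ε j)
  rw [hk] at e1
  rw [hr, dim]
  congr 1
  omega

theorem refl_dim_self (hsurj : M.SurjAt i) :
    (M.refl i hs s' t' h1 h2).dim i = (∑ a, if t a = i then M.dim (s a) else 0) - M.dim i := by
  classical
  let r : M.reflSub i →ₗ[ℂ] M.reflSub i := (M.reflEps i i).restrict (M.reflEps_mem i i)
  change ((Module.finrank ℂ (LinearMap.range r) : ℕ) : ℤ) = _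
  let T := (a : {a // t a = i}) → LinearMap.range (M.ε (s a))
  let ext : T →ₗ[ℂ] (A → M.E) := LinearMap.pi fun a => if h : t a = i then
    (LinearMap.range (M.ε (s a))).subtype ∘ₗ LinearMap.proj (⟨a, h⟩ : {a // t a = i}) else 0
  have hext1 : ∀ (z : T) a (h : t a = i), ext z a = (z ⟨a, h⟩ : M.E) := by
    intro z a h; simp [ext, h]; rfl
  have hext2 : ∀ (z : T) a, t a ≠ i → ext z a = 0 := by
    intro z a h; simp [ext, h]
  have hεr : ∀ j x, x ∈ LinearMap.range (M.ε j) → M.ε j x = x := by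
    rintro j _ ⟨x, rfl⟩; rw [M.idem]
  let H : T →ₗ[ℂ] M.E := M.sinkMap i ∘ₗ ext
  have hH : LinearMap.range H = LinearMap.range (M.ε i) := by
    apply le_antisymm
    · rintro _ ⟨z, rfl⟩
      exact ⟨_, M.eps_sinkMap i _⟩
    · rintro _ ⟨x, rfl⟩
      obtain ⟨y, hy1, hy2, hy3⟩ := hsurj x
      refine ⟨fun a => ⟨y a, ⟨y a, hy2 a⟩⟩, ?_⟩
      rw [← hy3, ← sinkMap_of M i y hy1]
      simp only [H, LinearMap.comp_apply]
      congr 1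
      funext a
      by_cases h : t a = i
      · rw [hext1 _ _ h]
      · rw [hext2 _ _ h, hy1 _ h]
  have hmem : ∀ z : LinearMap.ker H, ((0, ext z.1) : M.E × (A → M.E)) ∈ M.reflSub i := by
    intro z
    refine ⟨by simp, hext2 _, ?_, ?_⟩
    · intro a
      by_cases h : t a = i
      · simp only [hext1 _ _ h]
        exact hεr _ _ (z.1 ⟨a, h⟩).2
      · simp [hext2 _ _ h]
    · have := z.2
      rw [LinearMap.mem_ker] at this
      dsimp only
      rw [← sinkMap_of M i _ (hext2 z.1)]
      exact this
  let J : LinearMap.ker H →ₗ[ℂ] M.reflSub i := LinearMap.codRestrict (M.reflSub i)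
    (LinearMap.inr ℂ _ _ ∘ₗ ext ∘ₗ (LinearMap.ker H).subtype) hmem
  have hJinj : Function.Injective J := by
    intro z z' h
    have h3 : ext z.1 = ext z'.1 := congrArg (fun p : M.reflSub i => p.1.2) h
    apply Subtype.ext
    funext a
    apply Subtype.ext
    rw [← hext1 z.1 a.1 a.2, ← hext1 z'.1 a.1 a.2, h3]
  have hJ : ∀ z, (J z).1 = (0, ext z.1) := fun z => rfl
  have hr' : ∀ p, (r p).1 = M.reflEps i i p.1 := fun p => rfl
  have hJr : LinearMap.range r = LinearMap.range J := by
    apply le_antisymm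
    · rintro _ ⟨p, rfl⟩
      obtain ⟨q1, q2, q3, q4⟩ := p.2
      have hee : ext (fun a => ⟨p.1.2 a, ⟨p.1.2 a, q3 a⟩⟩) = p.1.2 := by
        funext a
        by_cases h : t a = i
        · rw [hext1 _ _ h]
        · rw [hext2 _ _ h, q2 _ h]
      refine ⟨⟨fun a => ⟨p.1.2 a, ⟨p.1.2 a, q3 a⟩⟩, ?_⟩, ?_⟩
      · rw [LinearMap.mem_ker]
        simp only [H, LinearMap.comp_apply]
        rw [hee, sinkMap_of _ _ _ q2, q4]
      · apply Subtype.ext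
        rw [hr', hJ, reflEps_self]
        exact congrArg (Prod.mk _) hee
    · rintro _ ⟨z, rfl⟩
      refine ⟨J z, Subtype.ext ?_⟩
      rw [hr', hJ, reflEps_self]
  have e1 := LinearMap.finrank_range_add_finrank_ker H
  have e2 : Module.finrank ℂ (LinearMap.range J) = Module.finrank ℂ (LinearMap.ker H) :=
    LinearMap.finrank_range_of_inj hJinj
  have e3 : Module.finrank ℂ T = ∑ a : {a // t a = i}, Module.finrank ℂ (LinearMap.range (M.ε (s a))) :=
    Module.finrank_pi_fintype ℂ
  have e4 : (∑ a, if t a = i then M.dim (s a) else 0) = ((Module.finrank ℂ T : ℕ) : ℤ) := by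
    rw [e3, ← Finset.sum_filter, Finset.sum_subtype (p := fun a => t a = i) (F := inferInstance) _ (by simp)]
    simp [dim]
  rw [hJr, e2, e4, ← e1, hH, dim]
  push_cast
  ring

end

end TRep

/-- One reflection step at a sink. -/
theorem TClaim.of_refl {V A : Type} [Fintype V] [DecidableEq V] [Fintype A] {s t : A → V}
    (i : V) (hs : ∀ a, s a ≠ i) (s' t' : A → V)
    (h1 : ∀ a, t a = i → s' a = i ∧ t' a = s a) (h2 : ∀ a, t a ≠ i → s' a = s a ∧ t' a = t a)
    {α β : V → ℤ} (hα : ∃ j, j ≠ i ∧ α j ≠ 0) (hne : ∀ j, j ≠ i → β j = α j)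
    (hi : β i = (∑ a, if t a = i then α (s a) else 0) - α i)
    (h : TClaim s' t' β) : TClaim s t α := by
  constructor
  · intro M hM hd
    subst hd
    have hsurj := M.surjAt_of_indec hM i hs hα
    refine M.brick_of_refl i hs s' t' h1 h2 hM hα (h.1 _ (M.refl_indec i hs s' t' h1 h2 hM hα) ?_)
    funext j
    by_cases hj : j = i
    · subst hj
      rw [TRep.refl_dim_self _ _ _ _ _ _ _ hsurj, hi]
    · rw [TRep.refl_dim_ne _ _ _ _ _ _ _ hj, hne _ hj]
  · obtain ⟨N, hN, hd⟩ := h.2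
    have hD : N.dual.dim = β := by rw [TRep.dim_dual, hd]
    have ht' : ∀ a, t' a ≠ i := by
      intro a
      by_cases ha : t a = i
      · rw [(h1 a ha).2]; exact hs a
      · rw [(h2 a ha).2]; exact ha
    have hs' : ∀ a, s' a = i ↔ t a = i := by
      intro a
      by_cases ha : t a = i
      · simp [ha, (h1 a ha).1]
      · simp [ha, (h2 a ha).1, hs a]
    have hβ : ∃ j, j ≠ i ∧ N.dual.dim j ≠ 0 := by
      obtain ⟨j, hj, hjα⟩ := hα
      exact ⟨j, hj, by rwa [hD, hne _ hj]⟩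
    have k1 : ∀ a, s' a = i → t a = i ∧ s a = t' a := fun a ha => by
      rw [hs'] at ha; exact ⟨ha, (h1 a ha).2.symm⟩
    have k2 : ∀ a, s' a ≠ i → t a = t' a ∧ s a = s' a := fun a ha => by
      rw [Ne, hs'] at ha; exact ⟨(h2 a ha).2.symm, (h2 a ha).1.symm⟩
    have hsurj := N.dual.surjAt_of_indec hN.dual.indec i ht' hβ
    refine ⟨(N.dual.refl i ht' t s k1 k2).dual, (N.dual.refl_brick i ht' t s k1 k2 hN.dual hβ).dual, ?_⟩
    rw [TRep.dim_dual]
    funext j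
    by_cases hj : j = i
    · subst hj
      rw [TRep.refl_dim_self _ _ _ _ _ _ _ hsurj, hD, hi]
      have : ∀ a, (if s' a = j then β (t' a) else 0) = if t a = j then α (s a) else 0 := by
        intro a
        by_cases ha : t a = j
        · rw [if_pos ha, if_pos ((hs' a).2 ha), (h1 a ha).2, hne _ (hs a)]
        · rw [if_neg ha, if_neg (fun h => ha ((hs' a).1 h))]
      simp only [this]
      ring
    · rw [TRep.refl_dim_ne _ _ _ _ _ _ _ hj, hD, hne _ hj]

set_option linter.all false

/-- The simple root at a sink. -/
theorem TClaim.simple {V A : Type} [Fintype V] [DecidableEq V] {s t : A → V}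
    (i : V) (hs : ∀ a, s a ≠ i) : TClaim s t (Pi.single i 1) := by
  constructor
  · intro M hM hd
    refine ⟨hM.1, fun f hf => ?_⟩
    have h0 : ∀ j, j ≠ i → ∀ x, M.ε j x = 0 := by
      intro j hj x
      have h1 := congrFun hd j
      rw [Pi.single_eq_of_ne hj, TRep.dim] at h1
      have h2 : LinearMap.range (M.ε j) = ⊥ := by
        apply Submodule.finrank_eq_zero.1
        exact_mod_cast h1
      rw [LinearMap.range_eq_bot] at h2
      rw [h2]; rfl
    have h1 : ∀ x, M.ε i x = x := by
      intro x
      conv_rhs => rw [← M.total x]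
      rw [Finset.sum_eq_single i]
      · intro j _ hj; exact h0 j hj x
      · simp
    have h2 : Module.finrank ℂ M.E = 1 := by
      have h3 := congrFun hd i
      rw [Pi.single_eq_same, TRep.dim] at h3
      have h4 : LinearMap.range (M.ε i) = ⊤ := by
        rw [LinearMap.range_eq_top]
        intro x; exact ⟨x, h1 x⟩
      rw [h4, finrank_top] at h3
      exact_mod_cast h3
    obtain ⟨v, hv, hv2⟩ := finrank_eq_one_iff'.1 h2
    obtain ⟨c, hc⟩ := hv2 (f v)
    refine ⟨c, fun x => ?_⟩
    obtain ⟨d, rfl⟩ := hv2 x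
    rw [map_smul, ← hc, smul_comm]
  · refine ⟨TRep.mk ℂ (fun j => if j = i then LinearMap.id else 0) (fun a => 0)
      ?_ ?_ ?_ ?_ ?_, ⟨?_, ?_⟩, ?_⟩
    · intro j x; by_cases h : j = i <;> simp [h]
    · intro j k x h
      by_cases h1 : j = i
      · have : k ≠ i := fun h2 => h (h1.trans h2.symm)
        simp [this]
      · simp [h1]
    · intro x
      rw [Finset.sum_eq_single i]
      · simp
      · intro j _ hj; simp [hj]
      · simp
    · intro a x; simp
    · intro a x; simp
    · exact (inferInstance : Nontrivial ℂ)
    · intro (f : ℂ →ₗ[ℂ] ℂ) hf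
      refine ⟨f 1, fun (x : ℂ) => ?_⟩
      change f x = f 1 * x
      have := f.map_smul x 1
      simp only [smul_eq_mul, mul_one] at this
      rw [this, mul_comm]
    · funext j
      by_cases h : j = i
      · subst h
        have h : LinearMap.range ((if j = j then LinearMap.id else 0 : ℂ →ₗ[ℂ] ℂ)) = ⊤ := by
          rw [if_pos rfl, LinearMap.range_id]
        have h2 : Module.finrank ℂ (LinearMap.range (if j = j then LinearMap.id else 0 : ℂ →ₗ[ℂ] ℂ)) = 1 := by
          rw [h, finrank_top, Module.finrank_self]
        rw [Pi.single_eq_same]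
        change ((Module.finrank ℂ (LinearMap.range (if j = j then LinearMap.id else 0 : ℂ →ₗ[ℂ] ℂ)) : ℕ) : ℤ) = 1
        rw [h2]; rfl
      · simp [TRep.dim, h]

set_option linter.all false

section Comb

variable {V A : Type} [Fintype V] [DecidableEq V] [Fintype A]

/-- Euler form. -/
def eF (s t : A → V) (x y : V → ℤ) : ℤ := (∑ i, x i * y i) - ∑ a, x (s a) * y (t a)

variable (s t : A → V)

theorem eF_add_left (x y z : V → ℤ) : eF s t (x + y) z = eF s t x z + eF s t y z := by
  simp only [eF, Pi.add_apply, add_mul, Finset.sum_add_distrib]; ring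

theorem eF_add_right (x y z : V → ℤ) : eF s t z (x + y) = eF s t z x + eF s t z y := by
  simp only [eF, Pi.add_apply, mul_add, Finset.sum_add_distrib]; ring

theorem eF_smul_left (n : ℤ) (x z : V → ℤ) : eF s t (n • x) z = n * eF s t x z := by
  simp only [eF, Pi.smul_apply, smul_eq_mul, mul_assoc, ← Finset.mul_sum, mul_sub]

theorem eF_smul_right (n : ℤ) (x z : V → ℤ) : eF s t z (n • x) = n * eF s t z x := by
  simp only [eF, Pi.smul_apply, smul_eq_mul, mul_left_comm _ n, ← Finset.mul_sum, mul_sub]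

theorem eF_op (x y : V → ℤ) : eF t s x y = eF s t y x := by
  simp only [eF, mul_comm]

theorem eF_single_right (x : V → ℤ) (i : V) :
    eF s t x (Pi.single i 1) = x i - ∑ a, if t a = i then x (s a) else 0 := by
  simp [eF, Pi.single_apply]

theorem eF_single_left (x : V → ℤ) (i : V) :
    eF s t (Pi.single i 1) x = x i - ∑ a, if s a = i then x (t a) else 0 := by
  simp [eF, Pi.single_apply]

theorem eF_sum_left (y z : V → ℤ) : eF s t y z = ∑ j, y j * eF s t (Pi.single j 1) z := by
  simp only [eF_single_left, mul_sub, Finset.sum_sub_distrib, Finset.mul_sum]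
  rw [Finset.sum_comm, eF]
  simp

theorem eF_sum_right (y z : V → ℤ) : eF s t z y = ∑ j, y j * eF s t z (Pi.single j 1) := by
  rw [← eF_op, eF_sum_left]
  simp only [eF_op s t]

/-- Numerical data of an affine quiver. -/
structure Aff (s t : A → V) (δ : V → ℤ) : Prop where
  noloop : ∀ a, s a ≠ t a
  wf : WellFounded (fun j i => ∃ a, s a = i ∧ t a = j)
  psd : ∀ x, 0 ≤ eF s t x x
  pos : ∀ i, 0 < δ i
  rad : ∀ x, (∀ y, eF s t x y + eF s t y x = 0) ↔ ∃ m : ℤ, x = m • δ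

variable {s t}

theorem Aff.op {δ : V → ℤ} (h : Aff s t δ) : Aff t s δ where
  noloop a := (h.noloop a).symm
  wf := by
    have h1 := h.wf.transGen
    let r : V → V → Prop := fun i j => Relation.TransGen (fun j i => ∃ a, s a = i ∧ t a = j) j i
    have : IsTrans V r := ⟨fun a b c h1 h2 => Relation.TransGen.trans h2 h1⟩
    have : Std.Irrefl r := ⟨fun a ha => h1.irrefl.irrefl a ha⟩
    have h2 : WellFounded r := Finite.wellFounded_of_trans_of_irrefl r
    refine Subrelation.wf ?_ h2
    rintro i j ⟨a, ha, hb⟩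
    exact Relation.TransGen.single ⟨a, hb, ha⟩
  psd x := by rw [eF_op]; exact h.psd x
  pos := h.pos
  rad x := by
    rw [← h.rad]
    simp only [eF_op s t]
    refine forall_congr' fun y => ?_
    rw [add_comm]

theorem Aff.zero {δ : V → ℤ} (h : Aff s t δ) {x : V → ℤ} (hx : eF s t x x = 0) :
    ∃ m : ℤ, x = m • δ := by
  rw [← h.rad]
  intro y
  have key : ∀ n : ℤ, 0 ≤ n * (eF s t x y + eF s t y x) + eF s t y y := by
    intro n
    have := h.psd (n • x + y)
    simp only [eF_add_left, eF_add_right, eF_smul_left, eF_smul_right, hx] at this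
    linarith
  by_contra hb
  have h1 := key ((eF s t x y + eF s t y x) * (-(eF s t y y) - 1))
  have h2 := h.psd y
  have h3 : 1 ≤ (eF s t x y + eF s t y x) ^ 2 := by
    have : 0 < (eF s t x y + eF s t y x) ^ 2 := by positivity
    omega
  nlinarith

theorem Aff.q_single {δ : V → ℤ} (h : Aff s t δ) (i : V) :
    eF s t (Pi.single i 1) (Pi.single i 1) = 1 := by
  rw [eF_single_left, Finset.sum_eq_zero]
  · simp
  · intro a _
    split_ifs with h1
    · rw [Pi.single_eq_of_ne]; rintro h2; exact h.noloop a (h1.trans h2.symm)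
    · rfl

/-- Reflection. -/
def sref (s t : A → V) (i : V) (x : V → ℤ) : V → ℤ :=
  x + (-(eF s t x (Pi.single i 1) + eF s t (Pi.single i 1) x)) • Pi.single i 1

theorem sref_ne {i j : V} (h : j ≠ i) (x : V → ℤ) : sref s t i x j = x j := by
  simp [sref, h]

theorem sref_self (i : V) (x : V → ℤ) : sref s t i x i =
    (∑ a, if s a = i then x (t a) else 0) + (∑ a, if t a = i then x (s a) else 0) - x i := by
  rw [sref, Pi.add_apply, Pi.smul_apply, Pi.single_eq_same, eF_single_left, eF_single_right,
    smul_eq_mul]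
  ring

theorem Aff.q_sref {δ : V → ℤ} (h : Aff s t δ) (i : V) (x : V → ℤ) :
    eF s t (sref s t i x) (sref s t i x) = eF s t x x := by
  simp only [sref, eF_add_left, eF_add_right, eF_smul_left, eF_smul_right, h.q_single]
  ring

theorem Aff.sref_nonneg {δ : V → ℤ} (h : Aff s t δ) (i : V) (x : V → ℤ) (hx : ∀ j, 0 ≤ x j)
    (hq : eF s t x x = 1) (hi : ∃ j, j ≠ i ∧ x j ≠ 0) : ∀ j, 0 ≤ sref s t i x j := by
  by_contra! hneg
  obtain ⟨k, hk⟩ := hneg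
  have hki : k = i := by
    by_contra hki
    rw [sref_ne hki] at hk
    exact absurd (hx k) (by omega)
  subst hki
  have hq' := h.q_sref k x
  set z := sref s t k x with hz
  let β : V → ℤ := z + (-(z k)) • Pi.single k 1
  have hzβ : z = β + (z k) • Pi.single k 1 := by
    simp [β, add_assoc]
  have hβk : β k = 0 := by simp [β]
  have hβj : ∀ j, j ≠ k → β j = x j := by
    intro j hj; simp [β, hj, hz, sref_ne hj]
  have hβ0 : ∀ j, 0 ≤ β j := by
    intro j
    by_cases hj : j = k
    · rw [hj, hβk]
    · rw [hβj _ hj]; exact hx j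
  have h1 : eF s t β (Pi.single k 1) ≤ 0 := by
    rw [eF_single_right, hβk, zero_sub, neg_nonpos]
    exact Finset.sum_nonneg fun a _ => by split_ifs <;> simp [hβ0]
  have h2 : eF s t (Pi.single k 1) β ≤ 0 := by
    rw [eF_single_left, hβk, zero_sub, neg_nonpos]
    exact Finset.sum_nonneg fun a _ => by split_ifs <;> simp [hβ0]
  have h3 := h.psd β
  have h4 : eF s t z z = eF s t β β + z k * (eF s t β (Pi.single k 1) + eF s t (Pi.single k 1) β)
      + z k * z k := by
    rw [hzβ]
    simp only [eF_add_left, eF_add_right, eF_smul_left, eF_smul_right, h.q_single, Pi.add_apply,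
      hβk, Pi.smul_apply, Pi.single_eq_same]
    simp
    ring
  have h5 : eF s t β β = 0 := by
    have : 0 ≤ z k * (eF s t β (Pi.single k 1) + eF s t (Pi.single k 1) β) :=
      mul_nonneg_of_nonpos_of_nonpos hk.le (by linarith)
    nlinarith
  obtain ⟨m, hm⟩ := h.zero h5
  have hm0 : m = 0 := by
    have := congrFun hm k
    rw [hβk] at this
    simp only [Pi.smul_apply, smul_eq_mul] at this
    rcases mul_eq_zero.1 this.symm with h | h'
    · exact h
    · exact absurd (h.pos k) (by omega)
  obtain ⟨j, hj, hxj⟩ := hi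
  apply hxj
  rw [← hβj j hj, hm, hm0]; simp

open Classical in
/-- Sources after reflecting at all the vertices in `S`. -/
noncomputable def sS (s t : A → V) (S : Finset V) (a : A) : V :=
  if t a ∈ S ∧ s a ∉ S then t a else s a

open Classical in
/-- Targets after reflecting at all the vertices in `S`. -/
noncomputable def tS (s t : A → V) (S : Finset V) (a : A) : V :=
  if t a ∈ S ∧ s a ∉ S then s a else t a

theorem Aff.sweep_step {δ : V → ℤ} (h : Aff s t δ) (S : Finset V) (hS : ∀ a, s a ∈ S → t a ∈ S)
    (i : V) (hi : i ∉ S) (hiS : ∀ a, s a = i → t a ∈ S) (x : V → ℤ) (hx : ∀ j, 0 ≤ x j)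
    (hq : eF s t x x = 1) (hT : ¬ TClaim (sS s t S) (tS s t S) x) :
    (∀ j, 0 ≤ sref s t i x j) ∧
    ¬ TClaim (sS s t (insert i S)) (tS s t (insert i S)) (sref s t i x) := by
  have hsink : ∀ a, sS s t S a ≠ i := by
    intro a
    have h1 := h.noloop a
    have h2 := hS a
    have h3 := hiS a
    unfold sS
    grind
  have hex : ∃ j, j ≠ i ∧ x j ≠ 0 := by
    by_contra! hcon
    apply hT
    have e : x = x i • Pi.single i 1 := by
      funext j
      by_cases hj : j = i
      · subst hj; simp
      · simp [hj, hcon j hj]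
    have hxi : x i = 1 := by
      rw [e, eF_smul_left, eF_smul_right, h.q_single] at hq
      have := hx i
      nlinarith
    rw [hxi, one_smul] at e
    rw [e]
    exact TClaim.simple i hsink
  refine ⟨h.sref_nonneg i x hx hq hex, fun hcl => hT ?_⟩
  refine TClaim.of_refl i hsink (sS s t (insert i S)) (tS s t (insert i S)) ?_ ?_ hex
    (fun j hj => sref_ne hj x) ?_ hcl
  · intro a
    have h1 := h.noloop a
    have h2 := hS a
    have h3 := hiS a
    unfold sS tS
    grind
  · intro a
    have h1 := h.noloop a
    have h2 := hS a
    have h3 := hiS a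
    unfold sS tS
    grind
  · rw [sref_self, ← Finset.sum_add_distrib]
    congr 1
    refine Finset.sum_congr rfl fun a _ => ?_
    have h1 := h.noloop a
    have h2 := hS a
    have h3 := hiS a
    unfold sS tS
    grind

/-- The full sweep (Coxeter functor). -/
theorem Aff.sweep {δ : V → ℤ} (h : Aff s t δ) (α : V → ℤ) (hα : ∀ j, 0 ≤ α j)
    (hq : eF s t α α = 1) (hT : ¬ TClaim s t α) :
    ∃ β : V → ℤ, (∀ j, 0 ≤ β j) ∧ eF s t β β = 1 ∧ ¬ TClaim s t β ∧
      ∀ y, eF s t y β = - eF s t α y := by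
  have key : ∀ n ≤ Fintype.card V, ∃ S : Finset V, S.card = n ∧ (∀ a, s a ∈ S → t a ∈ S) ∧
      ∃ x : V → ℤ, (∀ j, 0 ≤ x j) ∧ eF s t x x = 1 ∧ ¬ TClaim (sS s t S) (tS s t S) x ∧
        (∀ j, j ∉ S → x j = α j) ∧
        ∀ j ∈ S, x j + α j = (∑ a, if s a = j then x (t a) else 0) +
          ∑ a, if t a = j then α (s a) else 0 := by
    intro n
    induction n with
    | zero =>
      intro _
      refine ⟨∅, by simp, by simp, α, hα, hq, ?_, by simp, by simp⟩
      have e1 : sS s t ∅ = s := by funext a; simp [sS]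
      have e2 : tS s t ∅ = t := by funext a; simp [tS]
      rw [e1, e2]; exact hT
    | succ n ih =>
      intro hn
      obtain ⟨S, hc, hS, x, hx, hxq, hxT, hx1, hx2⟩ := ih (by omega)
      obtain ⟨i0, hi0⟩ : ∃ i, i ∉ S := by
        by_contra! hcon
        have : S = Finset.univ := Finset.eq_univ_of_forall hcon
        rw [this, Finset.card_univ] at hc
        omega
      obtain ⟨i, hi, hmin⟩ := h.wf.has_min {i | i ∉ S} ⟨i0, hi0⟩
      simp only [Set.mem_setOf_eq] at hi hmin
      have hiS : ∀ a, s a = i → t a ∈ S := by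
        intro a ha
        by_contra hcon
        exact hmin (t a) hcon ⟨a, ha, rfl⟩
      obtain ⟨g1, g2⟩ := h.sweep_step S hS i hi hiS x hx hxq hxT
      refine ⟨insert i S, by rw [Finset.card_insert_of_notMem hi, hc], ?_, sref s t i x, g1, ?_, g2,
        ?_, ?_⟩
      · intro a
        have h2 := hS a
        have h3 := hiS a
        grind
      · rw [h.q_sref, hxq]
      · intro j hj
        rw [Finset.mem_insert, not_or] at hj
        rw [sref_ne hj.1, hx1 _ hj.2]
      · intro j hj
        by_cases hji : j = i
        · subst hji
          rw [sref_self, hx1 j hi, sub_add_cancel]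
          congr 1
          · refine Finset.sum_congr rfl fun a _ => ?_
            split_ifs with ha
            · rw [sref_ne]; intro hta; exact hi (hta ▸ hiS a ha)
            · rfl
          · refine Finset.sum_congr rfl fun a _ => ?_
            split_ifs with ha
            · exact hx1 _ (fun hsa => hi (ha ▸ hS a hsa))
            · rfl
        · have hjS : j ∈ S := (Finset.mem_insert.1 hj).resolve_left hji
          rw [sref_ne hji, hx2 j hjS]
          congr 1
          refine Finset.sum_congr rfl fun a _ => ?_
          split_ifs with ha
          · rw [sref_ne]; intro hta; exact hi (hta ▸ hS a (ha ▸ hjS))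
          · rfl
  obtain ⟨S, hc, hS, x, hx, hxq, hxT, -, hx2⟩ := key _ le_rfl
  have hSu : S = Finset.univ := (Finset.card_eq_iff_eq_univ S).1 hc
  subst hSu
  have e1 : sS s t Finset.univ = s := by funext a; simp [sS]
  have e2 : tS s t Finset.univ = t := by funext a; simp [tS]
  rw [e1, e2] at hxT
  refine ⟨x, hx, hxq, hxT, fun y => ?_⟩
  rw [eF_sum_left, eF_sum_right s t y α, ← Finset.sum_neg_distrib]
  refine Finset.sum_congr rfl fun j _ => ?_
  rw [eF_single_left, eF_single_right, ← mul_neg]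
  congr 1
  have := hx2 j (Finset.mem_univ j)
  linarith

end Comb

set_option linter.all false

section Comb2

variable {V A : Type} [Fintype V] [DecidableEq V] [Fintype A] {s t : A → V}

theorem Aff.delta_op {δ : V → ℤ} (h : Aff s t δ) (y : V → ℤ) : eF s t y δ = - eF s t δ y := by
  have := (h.rad δ).2 ⟨1, by simp⟩ y
  linarith

theorem Aff.claim_neg {δ : V → ℤ} (h : Aff s t δ) (α : V → ℤ) (hα : ∀ j, 0 ≤ α j)
    (hq : eF s t α α = 1) (hd : eF s t δ α < 0) : TClaim s t α := by
  by_contra hT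
  let P := {β : V → ℤ // (∀ j, 0 ≤ β j) ∧ eF s t β β = 1 ∧ ¬ TClaim s t β}
  have hstep : ∀ β : P, ∃ β' : P, ∀ y, eF s t y β'.1 = - eF s t β.1 y := by
    rintro ⟨β, h1, h2, h3⟩
    obtain ⟨β', g1, g2, g3, g4⟩ := h.sweep β h1 h2 h3
    exact ⟨⟨β', g1, g2, g3⟩, g4⟩
  choose f hf using hstep
  let a : ℕ → V → ℤ := fun n => (f^[n] ⟨α, hα, hq, hT⟩).1
  have ha0 : a 0 = α := rfl
  have ha1 : ∀ n j, 0 ≤ a n j := fun n => (f^[n] ⟨α, hα, hq, hT⟩).2.1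
  have ha2 : ∀ n, eF s t (a n) (a n) = 1 := fun n => (f^[n] ⟨α, hα, hq, hT⟩).2.2.1
  have ha3 : ∀ n y, eF s t y (a (n + 1)) = - eF s t (a n) y := by
    intro n y
    simp only [a, Function.iterate_succ_apply']
    exact hf _ y
  have hdef : ∀ n, eF s t δ (a n) = eF s t δ α := by
    intro n
    induction n with
    | zero => rfl
    | succ n ih => rw [ha3, h.delta_op, neg_neg, ih]
  set d := eF s t δ α with hdd
  let b : ℕ → V → ℤ := fun n i => eF s t (a n) (Pi.single i 1) + eF s t (Pi.single i 1) (a n)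
  have hb : ∀ n i, b n i ∈ Set.Icc (-2 : ℤ) 2 := by
    intro n i
    have h1 := h.psd (a n + Pi.single i 1)
    have h2 := h.psd (a n + (-1 : ℤ) • Pi.single i 1)
    simp only [eF_add_left, eF_add_right, eF_smul_left, eF_smul_right, h.q_single, ha2] at h1 h2
    constructor <;> simp only [b] <;> linarith
  have hpair : ∀ m j, 0 < j → b (m + j) = b m → ∀ i, a (m + j) i < a m i := by
    intro m j hj hbb
    obtain ⟨k, hk⟩ : ∃ k : ℤ, a (m + j) + (-1 : ℤ) • a m = k • δ := by
      rw [← h.rad]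
      intro y
      rw [eF_sum_left s t y, eF_sum_right s t y, ← Finset.sum_add_distrib]
      refine Finset.sum_eq_zero fun i _ => ?_
      have := congrFun hbb i
      simp only [b] at this
      rw [← mul_add]
      simp only [eF_add_left, eF_add_right, eF_smul_left, eF_smul_right]
      have e : eF s t (a (m + j)) (Pi.single i 1) + -1 * eF s t (a m) (Pi.single i 1) +
        (eF s t (Pi.single i 1) (a (m + j)) + -1 * eF s t (Pi.single i 1) (a m)) = 0 := by linarith
      rw [e, mul_zero]
    let γ : ℕ → V → ℤ := fun n => ∑ l ∈ Finset.range n, a (m + l)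
    have hγ0 : γ 0 = 0 := by simp [γ]
    have hγs : ∀ n, γ (n + 1) = γ n + a (m + n) := fun n => Finset.sum_range_succ _ _
    have hz1 : ∀ y, eF s t 0 y = 0 := fun y => by simp [eF]
    have hz2 : ∀ y, eF s t y 0 = 0 := fun y => by simp [eF]
    have hγB : ∀ n y, eF s t y (γ n) + eF s t (γ n) y = eF s t y (a m) - eF s t y (a (m + n)) := by
      intro n y
      induction n with
      | zero => simp [hγ0, hz1, hz2]
      | succ n ih =>
        rw [hγs, eF_add_left, eF_add_right, ← add_assoc m n 1, ha3]
        linarith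
    have hγd : ∀ n : ℕ, eF s t δ (γ n) = n * d := by
      intro n
      induction n with
      | zero => simp [hγ0, hz2]
      | succ n ih =>
        rw [hγs, eF_add_right, hdef, ih]; push_cast; ring
    have hmain : 2 * eF s t (γ j) (γ j) = k * (j * d) := by
      have h1 := hγB j (γ j)
      have h2 : eF s t (γ j) (a (m + j)) - eF s t (γ j) (a m) = k * eF s t (γ j) δ := by
        rw [← eF_smul_right, ← hk, eF_add_right, eF_smul_right]; ring
      rw [h.delta_op, hγd] at h2
      linarith
    have hjd : (j : ℤ) * d < 0 := mul_neg_of_pos_of_neg (by exact_mod_cast hj) hd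
    have hkneg : k < 0 := by
      by_contra! hk0
      have h1 := h.psd (γ j)
      have h2 : k * (j * d) ≤ 0 := mul_nonpos_of_nonneg_of_nonpos hk0 hjd.le
      have h3 : eF s t (γ j) (γ j) = 0 := by linarith
      obtain ⟨r, hr⟩ := h.zero h3
      have h4 := hγd j
      rw [hr, eF_smul_right] at h4
      have h5 : eF s t δ δ = 0 := by have := h.delta_op δ; linarith
      rw [h5, mul_zero] at h4
      omega
    intro i
    have h1 := congrFun hk i
    simp only [Pi.add_apply, Pi.smul_apply, smul_eq_mul] at h1
    have h2 := mul_neg_of_neg_of_pos hkneg (h.pos i)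
    linarith
  let F : ℕ → (V → Set.Icc (-2 : ℤ) 2) := fun n i => ⟨b n i, hb n i⟩
  obtain ⟨c, hc⟩ := Finite.exists_infinite_fiber F
  have hinf : (F ⁻¹' {c}).Infinite := Set.infinite_coe_iff.1 hc
  classical
  let g := Nat.orderEmbeddingOfSet (F ⁻¹' {c})
  have hg : ∀ n, F (g n) = c := fun n => by
    have : g n ∈ Set.range g := ⟨n, rfl⟩
    rw [show Set.range g = F ⁻¹' {c} from Nat.orderEmbeddingOfSet_range _] at this
    exact this
  obtain ⟨i⟩ : Nonempty V := by
    by_contra hcon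
    rw [not_nonempty_iff] at hcon
    have : α = 0 := Subsingleton.elim _ _
    rw [this] at hq
    simp [eF] at hq
  have hdec : ∀ n, a (g (n + 1)) i < a (g n) i := by
    intro n
    have h1 : g n < g (n + 1) := g.strictMono (Nat.lt_succ_self n)
    obtain ⟨j, hj⟩ := Nat.exists_eq_add_of_lt h1
    have h2 : b (g (n + 1)) = b (g n) := by
      have : F (g (n + 1)) = F (g n) := (hg _).trans (hg _).symm
      funext i
      exact congrArg Subtype.val (congrFun this i)
    rw [hj, add_assoc] at h2 ⊢
    exact hpair _ _ (by omega) h2 i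
  have hdec2 : ∀ n : ℕ, a (g n) i ≤ a (g 0) i - n := by
    intro n
    induction n with
    | zero => simp
    | succ n ih => have := hdec n; push_cast; omega
  have h1 := hdec2 ((a (g 0) i).toNat + 1)
  have h2 := ha1 (g ((a (g 0) i).toNat + 1)) i
  have h3 := ha1 (g 0) i
  push_cast at h1
  omega

theorem Aff.claim {δ : V → ℤ} (h : Aff s t δ) (α : V → ℤ) (hα : ∀ j, 0 ≤ α j)
    (hq : eF s t α α = 1) (hd : eF s t δ α ≠ 0) : TClaim s t α := by
  rcases lt_or_gt_of_ne hd with h1 | h1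
  · exact h.claim_neg α hα hq h1
  · refine TClaim.dual (h.op.claim_neg α hα (by rw [eF_op, hq]) ?_)
    rw [eF_op, h.delta_op]
    linarith

/-- Acyclicity gives well-foundedness. -/
theorem wf_of_acyclic (hac : ¬ ∃ (n : ℕ) (g : Fin (n + 1) → A), ∀ k, t (g k) = s (g (k + 1))) :
    WellFounded (fun j i => ∃ a, s a = i ∧ t a = j) := by
  rw [wellFounded_iff_isEmpty_descending_chain]
  constructor
  rintro ⟨f, hf⟩
  choose p hp1 hp2 using hf
  have hinj : ¬ Function.Injective f := not_injective_infinite_finite f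
  have : ∃ m j, f m = f (m + j + 1) := by
    simp only [Function.Injective, not_forall] at hinj
    obtain ⟨x, y, hxy, hne⟩ := hinj
    rcases lt_or_gt_of_ne hne with h1 | h1
    · obtain ⟨j, hj⟩ := Nat.exists_eq_add_of_lt h1
      exact ⟨x, j, hj ▸ hxy⟩
    · obtain ⟨j, hj⟩ := Nat.exists_eq_add_of_lt h1
      exact ⟨y, j, hj ▸ hxy.symm⟩
  obtain ⟨m, j, hmj⟩ := this
  apply hac
  refine ⟨j, fun k => p (m + k.1), fun k => ?_⟩
  rw [hp2, hp1]
  by_cases hk : k = Fin.last j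
  · subst hk
    simp [hmj, add_assoc]
  · have : ((k + 1 : Fin (j + 1)) : ℕ) = k + 1 := by
      rw [Fin.val_add_one, if_neg hk]
    rw [this, add_assoc]

end Comb2

set_option linter.all false

section Bridge

variable {Q : FinQuiver}

/-- Total space form of a representation. -/
noncomputable def QRep.toT (P : QRep Q ℂ) : TRep Q.src Q.tgt where
  E := ∀ i, P.carrier i
  ε i := LinearMap.single ℂ P.carrier i ∘ₗ LinearMap.proj i
  φ a := arrowEnd P a
  idem i x := by simp
  orth i j x h := by simp [h]
  total x := by
    funext j
    simp [Finset.sum_apply, Pi.single_apply]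
  left a x := by simp [arrowEnd]
  right a x := by simp [arrowEnd]

/-- Brick property for quiver representations. -/
def QBrick (P : QRep Q ℂ) : Prop :=
  (∃ i, 0 < Module.finrank ℂ (P.carrier i)) ∧
  ∀ f : ∀ i, P.carrier i →ₗ[ℂ] P.carrier i,
    (∀ a x, f (Q.tgt a) (P.map a x) = P.map a (f (Q.src a) x)) → ∃ c : ℂ, ∀ i x, f i x = c • x

theorem QRep.toT_dim (P : QRep Q ℂ) : P.toT.dim = P.dimVec := by
  funext i
  change ((Module.finrank ℂ (LinearMap.range
    (LinearMap.single ℂ P.carrier i ∘ₗ LinearMap.proj i)) : ℕ) : ℤ) = _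
  rw [LinearMap.range_comp_of_range_eq_top, LinearMap.finrank_range_of_inj]
  · rfl
  · exact Pi.single_injective i
  · rw [LinearMap.range_eq_top]
    exact Function.surjective_eval i

theorem QRep.toT_indec (P : QRep Q ℂ) (hP : P.Indecomposable) : P.toT.Indec := by
  constructor
  · obtain ⟨i, hi⟩ := hP.1
    have : Nontrivial (P.carrier i) := Module.nontrivial_of_finrank_pos hi
    obtain ⟨x, hx⟩ := exists_ne (0 : P.carrier i)
    refine ⟨(Pi.single i x : ∀ i, P.carrier i), (0 : ∀ i, P.carrier i), ?_⟩
    intro h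
    apply hx
    have := congrFun h i
    simpa using this
  · intro (e : (∀ i, P.carrier i) →ₗ[ℂ] (∀ i, P.carrier i)) he hee
    let E : ∀ i, P.carrier i →ₗ[ℂ] P.carrier i := fun i =>
      LinearMap.proj i ∘ₗ e ∘ₗ LinearMap.single ℂ P.carrier i
    have hE0 : ∀ i x, E i x = e (Pi.single i x) i := fun i x => rfl
    have he1 : ∀ i (x : ∀ i, P.carrier i), e (Pi.single i (x i)) = Pi.single i (e x i) :=
      fun i x => he.1 i x
    have he2 : ∀ a (x : ∀ i, P.carrier i), e (Pi.single (Q.tgt a) (P.map a (x (Q.src a)))) =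
      Pi.single (Q.tgt a) (P.map a (e x (Q.src a))) := fun a x => he.2 a x
    have hE1 : ∀ i x, e (Pi.single i x) = Pi.single i (E i x) := by
      intro i x
      have := he1 i (Pi.single i x)
      rw [Pi.single_eq_same] at this
      exact this
    have hE2 : ∀ i (x : ∀ i, P.carrier i), e x i = E i (x i) := by
      intro i x
      have := congrFun (he1 i x) i
      rw [Pi.single_eq_same] at this
      exact this.symm
    have hE3 : ∀ i x, E i (E i x) = E i x := by
      intro i x
      rw [← Pi.single_eq_same (M := P.carrier) i (E i x), ← hE1, ← hE2]
      have := congrFun (hee (Pi.single i x)) i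
      exact this
    have hE4 : ∀ a x, E (Q.tgt a) (P.map a x) = P.map a (E (Q.src a) x) := by
      intro a x
      have := congrFun (he2 a (Pi.single (Q.src a) x)) (Q.tgt a)
      rw [Pi.single_eq_same, Pi.single_eq_same] at this
      exact this
    let U : SubRep P := ⟨fun i => LinearMap.range (E i), by
      rintro a _ ⟨x, rfl⟩
      exact ⟨P.map a x, hE4 a x⟩⟩
    let W : SubRep P := ⟨fun i => LinearMap.ker (E i), by
      intro a x hx
      rw [LinearMap.mem_ker] at hx ⊢
      rw [hE4, hx, map_zero]⟩
    have hUW : ∀ i, IsCompl (U.mod i) (W.mod i) := by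
      intro i
      constructor
      · rw [Submodule.disjoint_def]
        rintro _ ⟨x, rfl⟩ hx
        have hx' : E i (E i x) = 0 := hx
        rw [hE3] at hx'
        exact hx'
      · rw [codisjoint_iff, eq_top_iff]
        intro x _
        rw [Submodule.mem_sup]
        refine ⟨E i x, ⟨x, rfl⟩, x - E i x, ?_, by abel⟩
        change E i (x - E i x) = 0
        rw [map_sub, hE3, sub_self]
    rcases hP.2 U W hUW with h | h
    · left
      intro (x : ∀ i, P.carrier i)
      change e x = 0
      funext i
      rw [hE2]
      have h1 : E i = 0 := LinearMap.range_eq_bot.1 (h i)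
      rw [h1]; rfl
    · right
      intro (x : ∀ i, P.carrier i)
      change e x = x
      funext i
      rw [hE2]
      have h1 : LinearMap.ker (E i) = ⊥ := h i
      exact LinearMap.ker_eq_bot.1 h1 (hE3 i (x i))

theorem QRep.brick_of_toT (P : QRep Q ℂ) (hP : P.toT.Brick) : QBrick P := by
  constructor
  · by_contra! hcon
    have h1 : ∀ i, Subsingleton (P.carrier i) := fun i =>
      Module.finrank_zero_iff.1 (Nat.le_zero.1 (hcon i))
    have h2 : Subsingleton (∀ i, P.carrier i) := inferInstance
    have h3 : Nontrivial (∀ i, P.carrier i) := hP.1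
    exact not_subsingleton _ h2
  · intro f hf
    let F : (∀ i, P.carrier i) →ₗ[ℂ] (∀ i, P.carrier i) :=
      LinearMap.pi fun i => f i ∘ₗ LinearMap.proj i
    have hF : ∀ x i, F x i = f i (x i) := fun x i => rfl
    have hFs : ∀ i x, F (Pi.single i x) = Pi.single i (f i x) := by
      intro i x
      funext j
      rw [hF]
      by_cases h : j = i
      · subst h; simp
      · simp [h]
    obtain ⟨c, hc⟩ := hP.2 F ⟨fun i x => hFs i (x i), fun a (x : ∀ i, P.carrier i) => by
      change F (Pi.single (Q.tgt a) (P.map a (x (Q.src a)))) =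
        Pi.single (Q.tgt a) (P.map a (F x (Q.src a)))
      rw [hFs, hf, hF]⟩
    refine ⟨c, fun i x => ?_⟩
    have h1 : F (Pi.single i x) = c • Pi.single i x := hc (Pi.single i x)
    rw [hFs] at h1
    have := congrFun h1 i
    simpa using this

/-- Back from total space form. -/
noncomputable def TRep.toQ (M : TRep Q.src Q.tgt) : QRep Q ℂ where
  carrier i := LinearMap.range (M.ε i)
  map a := (M.φ a).restrict (fun x _ => ⟨M.φ a x, M.left a x⟩)

theorem TRep.toQ_dim (M : TRep Q.src Q.tgt) : M.toQ.dimVec = M.dim := rfl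

theorem TRep.toQ_brick (M : TRep Q.src Q.tgt) (hM : M.Brick) : QBrick M.toQ := by
  constructor
  · by_contra! hcon
    have h1 : ∀ i, LinearMap.range (M.ε i) = ⊥ := fun i =>
      Submodule.finrank_eq_zero.1 (Nat.le_zero.1 (hcon i))
    have := hM.1
    obtain ⟨x, hx⟩ := exists_ne (0 : M.E)
    apply hx
    rw [← M.total x]
    refine Finset.sum_eq_zero fun i _ => ?_
    rw [LinearMap.range_eq_bot.1 (h1 i)]; rfl
  · intro (f : ∀ i, LinearMap.range (M.ε i) →ₗ[ℂ] LinearMap.range (M.ε i)) hf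
    let G : ∀ i, M.E →ₗ[ℂ] M.E := fun i =>
      (LinearMap.range (M.ε i)).subtype ∘ₗ f i ∘ₗ (M.ε i).rangeRestrict
    have hG : ∀ i x, G i x = (f i ⟨M.ε i x, ⟨x, rfl⟩⟩).1 := fun i x => rfl
    have hr : ∀ i (x : LinearMap.range (M.ε i)), M.ε i x.1 = x.1 := by
      rintro i ⟨_, x, rfl⟩; exact M.idem i x
    let F : M.E →ₗ[ℂ] M.E := ∑ i, G i
    have hF : ∀ x, F x = ∑ i, G i x := fun x => by simp [F]
    have hGG : ∀ i x, M.ε i (G i x) = G i x := fun i x => hr i _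
    have hG1 : ∀ i x, G i (M.ε i x) = G i x := by
      intro i x
      rw [hG, hG]
      congr 2
      exact Subtype.ext (M.idem i x)
    have hG2 : ∀ i j x, i ≠ j → G i (M.ε j x) = 0 := by
      intro i j x h
      rw [hG]
      have : (⟨M.ε i (M.ε j x), ⟨_, rfl⟩⟩ : LinearMap.range (M.ε i)) = 0 :=
        Subtype.ext (M.orth i j x h)
      rw [this, map_zero]; rfl
    have hF1 : ∀ i x, F (M.ε i x) = G i x := by
      intro i x
      rw [hF, Finset.sum_eq_single i, hG1]
      · intro j _ hj; exact hG2 j i x hj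
      · simp
    have hF2 : ∀ i x, M.ε i (F x) = G i x := by
      intro i x
      rw [hF, map_sum, Finset.sum_eq_single i, hGG]
      · intro j _ hj
        rw [← hGG, M.orth _ _ _ hj.symm]
      · simp
    obtain ⟨c, hc⟩ := hM.2 F ⟨fun i x => by rw [hF1, hF2], fun a x => by
      rw [← M.left a x, hF1, ← M.right a (F x), hF2, hG]
      have h1 := congrArg Subtype.val (hf a ⟨M.ε (Q.src a) x, ⟨x, rfl⟩⟩)
      refine Eq.trans ?_ h1
      congr 2
      apply Subtype.ext
      change M.ε (Q.tgt a) (M.φ a x) = M.φ a (M.ε (Q.src a) x)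
      rw [M.left, M.right]⟩
    refine ⟨c, fun i (x : LinearMap.range (M.ε i)) => Subtype.ext ?_⟩
    have h1 : F x.1 = c • x.1 := hc x.1
    refine Eq.trans ?_ h1
    rw [← hr i x, hF1, hG]
    congr 2
    exact Subtype.ext (hr i x).symm

end Bridge

set_option linter.all false

section Stab

variable {Q : FinQuiver}

/-- The standard complex computing Hom and Ext. -/
noncomputable def dHom (X Y : QRep Q ℂ) : (∀ i, X.carrier i →ₗ[ℂ] Y.carrier i) →ₗ[ℂ]
    (∀ a, X.carrier (Q.src a) →ₗ[ℂ] Y.carrier (Q.tgt a)) where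
  toFun f a := f (Q.tgt a) ∘ₗ X.map a - Y.map a ∘ₗ f (Q.src a)
  map_add' f g := by
    funext a; ext x; simp; abel
  map_smul' c f := by
    funext a; ext x; simp [smul_sub]

theorem dHom_apply (X Y : QRep Q ℂ) (f a x) :
    dHom X Y f a x = f (Q.tgt a) (X.map a x) - Y.map a (f (Q.src a) x) := rfl

theorem euler_eq (X Y : QRep Q ℂ) : Q.eulerForm X.dimVec Y.dimVec =
    (Module.finrank ℂ (∀ i, X.carrier i →ₗ[ℂ] Y.carrier i) : ℤ) -
    (Module.finrank ℂ (∀ a, X.carrier (Q.src a) →ₗ[ℂ] Y.carrier (Q.tgt a)) : ℤ) := by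
  rw [Module.finrank_pi_fintype, Module.finrank_pi_fintype]
  simp only [Module.finrank_linearMap]
  push_cast
  rfl

theorem brick_sub {P : QRep Q ℂ} (hP : QBrick P) (hq : Q.titsForm P.dimVec = 1) (U : SubRep P)
    (hU0 : ¬ ∀ i, U.mod i = ⊥) (hU1 : ¬ ∀ i, U.mod i = ⊤) :
    canonicalWeight Q P.dimVec U.dimVec < 0 := by
  have h1 : Q.eulerForm P.dimVec U.toRep.dimVec ≤ 0 := by
    have hinj : Function.Injective (dHom P U.toRep) := by
      rw [← LinearMap.ker_eq_bot, LinearMap.ker_eq_bot']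
      intro f hf
      have hf' : ∀ a x, f (Q.tgt a) (P.map a x) = U.toRep.map a (f (Q.src a) x) := by
        intro a x
        have := congrArg (fun g => g a x) hf
        exact sub_eq_zero.1 this
      obtain ⟨c, hc⟩ := hP.2 (fun i => (U.mod i).subtype ∘ₗ f i)
        (fun a x => congrArg Subtype.val (hf' a x))
      by_cases hc0 : c = 0
      · funext i
        ext x
        apply Subtype.ext
        refine (hc i x).trans ?_
        rw [hc0, zero_smul]; rfl
      · exfalso
        apply hU1
        intro i
        rw [eq_top_iff]
        intro x _
        have h2 : c • x ∈ U.mod i := by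
          rw [← hc i x]; exact (f i x).2
        exact (Submodule.smul_mem_iff _ hc0).1 h2
    rw [euler_eq]
    have := LinearMap.finrank_le_finrank_of_injective hinj
    omega
  have hPs : Function.Surjective (dHom P P) := by
    let idF : ∀ i, P.carrier i →ₗ[ℂ] P.carrier i := fun i => LinearMap.id
    have hker : LinearMap.ker (dHom P P) ≤ Submodule.span ℂ {idF} := by
      intro f hf
      have hf' : ∀ a x, f (Q.tgt a) (P.map a x) = P.map a (f (Q.src a) x) := by
        intro a x
        have := congrArg (fun g => g a x) (LinearMap.mem_ker.1 hf)
        exact sub_eq_zero.1 this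
      obtain ⟨c, hc⟩ := hP.2 f hf'
      rw [Submodule.mem_span_singleton]
      refine ⟨c, ?_⟩
      funext i
      ext x
      exact (hc i x).symm
    have e1 : Module.finrank ℂ (LinearMap.ker (dHom P P)) ≤ 1 :=
      (Submodule.finrank_mono hker).trans ((finrank_span_le_card _).trans (by simp))
    have e2 := LinearMap.finrank_range_add_finrank_ker (dHom P P)
    have e3 := euler_eq P P
    rw [FinQuiver.titsForm] at hq
    rw [hq] at e3
    rw [← LinearMap.range_eq_top]
    apply Submodule.eq_top_of_finrank_eq
    have e4 := Submodule.finrank_le (LinearMap.range (dHom P P))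
    omega
  have h2 : 0 < Q.eulerForm U.toRep.dimVec P.dimVec := by
    have hs : Function.Surjective (dHom U.toRep P) := by
      intro h
      have : ∀ a, ∃ g : P.carrier (Q.src a) →ₗ[ℂ] P.carrier (Q.tgt a),
          g ∘ₗ (U.mod (Q.src a)).subtype = h a := fun a => LinearMap.exists_extend (h a)
      choose g hg using this
      obtain ⟨f, hf⟩ := hPs g
      refine ⟨fun i => f i ∘ₗ (U.mod i).subtype, ?_⟩
      rw [← funext hg, ← hf]
      rfl
    have hk : 0 < Module.finrank ℂ (LinearMap.ker (dHom U.toRep P)) := by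
      rw [Module.finrank_pos_iff, Submodule.nontrivial_iff_ne_bot]
      intro hbot
      let inc : ∀ i, U.toRep.carrier i →ₗ[ℂ] P.carrier i := fun i => (U.mod i).subtype
      have hm0 : dHom U.toRep P inc = 0 := by
        funext a
        ext x
        exact sub_self _
      have hm : inc = 0 := by
        have hm1 : inc ∈ LinearMap.ker (dHom U.toRep P) := LinearMap.mem_ker.2 hm0
        rw [hbot] at hm1
        exact (Submodule.mem_bot ℂ).1 hm1
      apply hU0
      intro i
      rw [eq_bot_iff]
      intro x hx
      exact congrArg (fun g => g i (⟨x, hx⟩ : U.mod i)) hm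
    rw [euler_eq]
    have e2 := LinearMap.finrank_range_add_finrank_ker (dHom U.toRep P)
    rw [LinearMap.range_eq_top.2 hs, finrank_top] at e2
    omega
  change Q.eulerForm P.dimVec U.toRep.dimVec - Q.eulerForm U.toRep.dimVec P.dimVec < 0
  omega

theorem weight_zero {α x : Q.V → ℤ} (h : ∀ i, x i = 0) : canonicalWeight Q α x = 0 := by
  simp [canonicalWeight, FinQuiver.eulerForm, h]

theorem weight_self {α x : Q.V → ℤ} (h : ∀ i, x i = α i) : canonicalWeight Q α x = 0 := by
  simp [canonicalWeight, FinQuiver.eulerForm, h]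

theorem weight_add {α x y z : Q.V → ℤ} (h : ∀ i, x i + y i = z i) :
    canonicalWeight Q α x + canonicalWeight Q α y = canonicalWeight Q α z := by
  simp only [canonicalWeight, FinQuiver.eulerForm, ← h, mul_add, add_mul, Finset.sum_add_distrib]
  ring

theorem arrowEnd_zero (X : QRep Q ℂ) (b : Q.A) (h : X.map b = 0) : arrowEnd X b = 0 := by
  rw [arrowEnd, h, LinearMap.zero_comp, LinearMap.comp_zero]

theorem SubRep.dimVec_bot {X : QRep Q ℂ} (U : SubRep X) (h : ∀ i, U.mod i = ⊥) (i : Q.V) :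
    U.dimVec i = 0 := by
  have h2 : Module.finrank ℂ (U.mod i) = 0 := Submodule.finrank_eq_zero.2 (h i)
  exact congrArg Nat.cast h2

theorem SubRep.dimVec_top {X : QRep Q ℂ} (U : SubRep X) (h : ∀ i, U.mod i = ⊤) (i : Q.V) :
    U.dimVec i = X.dimVec i := by
  have h2 : Module.finrank ℂ (U.mod i) = Module.finrank ℂ (X.carrier i) := by
    rw [h i, finrank_top]
  exact congrArg Nat.cast h2

theorem brick_stable {P : QRep Q ℂ} (hP : QBrick P) {α : Q.V → ℤ} (hα : P.dimVec = α)
    (hq : Q.titsForm α = 1) : LamAlphaStable α (extendZero P) := by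
  subst hα
  have key : ∀ U : SubRep (extendZero P), (¬ ∀ i, U.mod i = ⊥) → (¬ ∀ i, U.mod i = ⊤) →
      canonicalWeight Q P.dimVec U.dimVec < 0 := by
    intro U h0 h1
    exact brick_sub hP hq ⟨U.mod, fun a x hx => U.stable (Sum.inl a) x hx⟩ h0 h1
  refine ⟨sub_self _, fun U => ?_, key⟩
  by_cases h0 : ∀ i, U.mod i = ⊥
  · exact le_of_eq (weight_zero (SubRep.dimVec_bot U h0))
  by_cases h1 : ∀ i, U.mod i = ⊤
  · exact le_of_eq (weight_self (SubRep.dimVec_top U h1))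
  exact (key U h0 h1).le

theorem extendZero_rel (P : QRep Q ℂ) : PreprojRel Q (extendZero P) := by
  have h : ∀ a, arrowEnd (extendZero P) (Sum.inr a) = 0 := by
    intro a
    exact arrowEnd_zero _ _ rfl
  unfold PreprojRel
  simp only [h, LinearMap.zero_comp, LinearMap.comp_zero]

theorem iso_of_hom {α : Q.V → ℤ} {X Y : QRep Q.double ℂ} (hX : LamAlphaStable α X)
    (hY : LamAlphaStable α Y) (hdX : X.dimVec = α) (hdY : Y.dimVec = α)
    (f : ∀ i, X.carrier i →ₗ[ℂ] Y.carrier i)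
    (hf : ∀ b x, f (Q.double.tgt b) (X.map b x) = Y.map b (f (Q.double.src b) x))
    (hne : ¬ ∀ i, f i = 0) : Nonempty (RepIso X Y) := by
  let K : SubRep X := ⟨fun i => LinearMap.ker (f i), fun b x hx => by
    rw [LinearMap.mem_ker] at hx ⊢
    rw [hf, hx, map_zero]⟩
  let I : SubRep Y := ⟨fun i => LinearMap.range (f i), by
    rintro b _ ⟨x, rfl⟩
    exact ⟨X.map b x, hf b x⟩⟩
  have hsum : ∀ i, I.dimVec i + K.dimVec i = X.dimVec i := by
    intro i
    have := LinearMap.finrank_range_add_finrank_ker (f i)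
    simp only [SubRep.dimVec, QRep.dimVec]
    exact_mod_cast this
  have hw : canonicalWeight Q α I.dimVec + canonicalWeight Q α K.dimVec = 0 := by
    rw [← hX.1]
    exact weight_add hsum
  have hKbot : ∀ i, K.mod i = ⊥ := by
    by_contra hcon
    have h1 := hX.2.2 K hcon (fun h => hne fun i => LinearMap.ker_eq_top.1 (h i))
    have h2 := hY.2.1 I
    linarith
  have hinj : ∀ i, Function.Injective (f i) := fun i => LinearMap.ker_eq_bot.1 (hKbot i)
  have hfr : ∀ i, Module.finrank ℂ (X.carrier i) = Module.finrank ℂ (Y.carrier i) := by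
    intro i
    have := congrFun (hdX.trans hdY.symm) i
    simp only [QRep.dimVec] at this
    exact_mod_cast this
  exact ⟨⟨fun i => LinearMap.linearEquivOfInjective (f i) (hinj i) (hfr i), fun b x => hf b x⟩⟩

theorem RepIso.symm' {Q : FinQuiver} {X Y : QRep Q ℂ} (h : RepIso X Y) : Nonempty (RepIso Y X) := by
  refine ⟨⟨fun i => (h.equiv i).symm, fun a y => ?_⟩⟩
  rw [LinearEquiv.symm_apply_eq, h.comm, LinearEquiv.apply_symm_apply]

end Stab

set_option linter.all false

section Core

variable {V A : Type} [Fintype V] [DecidableEq V] [Fintype A] (s t : A → V)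
  (X Y : V → Type) [∀ i, AddCommGroup (X i)] [∀ i, Module ℂ (X i)]
  [∀ i, FiniteDimensional ℂ (X i)] [∀ i, AddCommGroup (Y i)] [∀ i, Module ℂ (Y i)]
  [∀ i, FiniteDimensional ℂ (Y i)]

/-- Families of maps along the arrows of the double quiver. -/
abbrev WW : Type := (∀ a, X (s a) →ₗ[ℂ] Y (t a)) × (∀ a, X (t a) →ₗ[ℂ] Y (s a))

/-- The first differential. -/
noncomputable def DD (u : ∀ a, X (s a) →ₗ[ℂ] X (t a)) (v : ∀ a, X (t a) →ₗ[ℂ] X (s a))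
    (u' : ∀ a, Y (s a) →ₗ[ℂ] Y (t a)) (v' : ∀ a, Y (t a) →ₗ[ℂ] Y (s a)) :
    (∀ i, X i →ₗ[ℂ] Y i) →ₗ[ℂ] WW s t X Y where
  toFun f := (fun a => f (t a) ∘ₗ u a - u' a ∘ₗ f (s a), fun a => f (s a) ∘ₗ v a - v' a ∘ₗ f (t a))
  map_add' f g := by
    ext1 <;> funext a <;> ext x <;> simp <;> abel
  map_smul' c f := by
    ext1 <;> funext a <;> ext x <;> simp [smul_sub]

/-- The trace pairing. -/
noncomputable def PP : WW s t Y X →ₗ[ℂ] Module.Dual ℂ (WW s t X Y) :=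
  LinearMap.mk₂ ℂ (fun h w => ∑ a, (LinearMap.trace ℂ _ (w.1 a ∘ₗ h.2 a) -
      LinearMap.trace ℂ _ (w.2 a ∘ₗ h.1 a)))
    (by
      intro h h' w
      rw [← Finset.sum_add_distrib]
      refine Finset.sum_congr rfl fun a _ => ?_
      simp only [Prod.fst_add, Prod.snd_add, Pi.add_apply, LinearMap.comp_add, map_add]
      ring)
    (by
      intro c h w
      rw [Finset.smul_sum]
      refine Finset.sum_congr rfl fun a _ => ?_
      simp only [Prod.smul_fst, Prod.smul_snd, Pi.smul_apply, LinearMap.comp_smul, map_smul, smul_sub])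
    (by
      intro h w w'
      rw [← Finset.sum_add_distrib]
      refine Finset.sum_congr rfl fun a _ => ?_
      simp only [Prod.fst_add, Prod.snd_add, Pi.add_apply, LinearMap.add_comp, map_add]
      ring)
    (by
      intro c h w
      rw [Finset.smul_sum]
      refine Finset.sum_congr rfl fun a _ => ?_
      simp only [Prod.smul_fst, Prod.smul_snd, Pi.smul_apply, LinearMap.smul_comp, map_smul, smul_sub])

theorem PP_apply (h : WW s t Y X) (w : WW s t X Y) : PP s t X Y h w =
    ∑ a, (LinearMap.trace ℂ _ (w.1 a ∘ₗ h.2 a) - LinearMap.trace ℂ _ (w.2 a ∘ₗ h.1 a)) := rfl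

theorem trace_nondeg {E F : Type} [AddCommGroup E] [Module ℂ E] [FiniteDimensional ℂ E]
    [AddCommGroup F] [Module ℂ F] [FiniteDimensional ℂ F] (h : E →ₗ[ℂ] F)
    (hh : ∀ g : F →ₗ[ℂ] E, LinearMap.trace ℂ E (g ∘ₗ h) = 0) : h = 0 := by
  ext x
  rw [LinearMap.zero_apply, ← Module.forall_dual_apply_eq_zero_iff ℂ]
  intro p
  have h1 := hh (p.smulRight x)
  have h2 : p.smulRight x ∘ₗ h = (p ∘ₗ h).smulRight x := by ext y; simp
  rw [h2, LinearMap.trace_smulRight] at h1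
  exact h1

theorem PP_injective : Function.Injective (PP s t X Y) := by
  classical
  rw [← LinearMap.ker_eq_bot, LinearMap.ker_eq_bot']
  intro h hh
  have h2 : ∀ w : WW s t X Y, ∑ a, (LinearMap.trace ℂ _ (w.1 a ∘ₗ h.2 a) -
      LinearMap.trace ℂ _ (w.2 a ∘ₗ h.1 a)) = 0 := fun w => by
    rw [← PP_apply, hh]; rfl
  ext1
  · funext a
    refine trace_nondeg _ fun g => ?_
    have h3 := h2 (0, Pi.single a g)
    rw [Finset.sum_eq_single a] at h3
    · simpa using h3
    · intro b _ hb; simp [Pi.single_eq_of_ne hb]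
    · simp
  · funext a
    refine trace_nondeg _ fun g => ?_
    have h3 := h2 (Pi.single a g, 0)
    rw [Finset.sum_eq_single a] at h3
    · simpa using h3
    · intro b _ hb; simp [Pi.single_eq_of_ne hb]
    · simp

variable {s t X Y}

theorem core_orth (u : ∀ a, X (s a) →ₗ[ℂ] X (t a)) (v : ∀ a, X (t a) →ₗ[ℂ] X (s a))
    (u' : ∀ a, Y (s a) →ₗ[ℂ] Y (t a)) (v' : ∀ a, Y (t a) →ₗ[ℂ] Y (s a))
    (hX : ∀ k : ∀ i, X i →ₗ[ℂ] X i, ∑ a, LinearMap.trace ℂ _ (k (t a) ∘ₗ u a ∘ₗ v a) =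
      ∑ a, LinearMap.trace ℂ _ (k (s a) ∘ₗ v a ∘ₗ u a))
    (hY : ∀ k : ∀ i, Y i →ₗ[ℂ] Y i, ∑ a, LinearMap.trace ℂ _ (k (t a) ∘ₗ u' a ∘ₗ v' a) =
      ∑ a, LinearMap.trace ℂ _ (k (s a) ∘ₗ v' a ∘ₗ u' a))
    (f : ∀ i, X i →ₗ[ℂ] Y i) (g : ∀ i, Y i →ₗ[ℂ] X i) :
    PP s t X Y (DD s t Y X u' v' u v g) (DD s t X Y u v u' v' f) = 0 := by
  rw [PP_apply]
  have h1 := hX (fun i => g i ∘ₗ f i)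
  have h2 := hY (fun i => f i ∘ₗ g i)
  have key : ∀ a, LinearMap.trace ℂ _ ((f (t a) ∘ₗ u a - u' a ∘ₗ f (s a)) ∘ₗ
        (g (s a) ∘ₗ v' a - v a ∘ₗ g (t a))) -
      LinearMap.trace ℂ _ ((f (s a) ∘ₗ v a - v' a ∘ₗ f (t a)) ∘ₗ
        (g (t a) ∘ₗ u' a - u a ∘ₗ g (s a))) =
      (LinearMap.trace ℂ _ ((g (s a) ∘ₗ f (s a)) ∘ₗ v a ∘ₗ u a) -
        LinearMap.trace ℂ _ ((g (t a) ∘ₗ f (t a)) ∘ₗ u a ∘ₗ v a)) +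
      (LinearMap.trace ℂ _ ((f (t a) ∘ₗ g (t a)) ∘ₗ u' a ∘ₗ v' a) -
        LinearMap.trace ℂ _ ((f (s a) ∘ₗ g (s a)) ∘ₗ v' a ∘ₗ u' a)) := by
    intro a
    have c1 := LinearMap.trace_comp_comm' (R := ℂ) (f (t a) ∘ₗ u a ∘ₗ g (s a)) (v' a)
    have c2 := LinearMap.trace_comp_comm' (R := ℂ) (f (s a) ∘ₗ v a ∘ₗ g (t a)) (u' a)
    have c3 := LinearMap.trace_comp_comm' (R := ℂ) (f (t a) ∘ₗ u a ∘ₗ v a) (g (t a))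
    have c4 := LinearMap.trace_comp_comm' (R := ℂ) (f (s a) ∘ₗ v a ∘ₗ u a) (g (s a))
    have c5 := LinearMap.trace_comp_comm' (R := ℂ) (f (s a) ∘ₗ g (s a) ∘ₗ v' a) (u' a)
    have c6 := LinearMap.trace_comp_comm' (R := ℂ) (f (t a) ∘ₗ g (t a) ∘ₗ u' a) (v' a)
    simp only [LinearMap.sub_comp, LinearMap.comp_sub, map_sub, LinearMap.comp_assoc] at c1 c2 c3 c4 c5 c6 ⊢
    linear_combination (-c1) + c2 + c3 - c4 - c5 + c6
  refine (Finset.sum_congr rfl fun a _ => key a).trans ?_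
  rw [Finset.sum_add_distrib, Finset.sum_sub_distrib, Finset.sum_sub_distrib]
  rw [h1, h2]
  ring

theorem core_exists (u : ∀ a, X (s a) →ₗ[ℂ] X (t a)) (v : ∀ a, X (t a) →ₗ[ℂ] X (s a))
    (u' : ∀ a, Y (s a) →ₗ[ℂ] Y (t a)) (v' : ∀ a, Y (t a) →ₗ[ℂ] Y (s a))
    (hX : ∀ k : ∀ i, X i →ₗ[ℂ] X i, ∑ a, LinearMap.trace ℂ _ (k (t a) ∘ₗ u a ∘ₗ v a) =
      ∑ a, LinearMap.trace ℂ _ (k (s a) ∘ₗ v a ∘ₗ u a))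
    (hY : ∀ k : ∀ i, Y i →ₗ[ℂ] Y i, ∑ a, LinearMap.trace ℂ _ (k (t a) ∘ₗ u' a ∘ₗ v' a) =
      ∑ a, LinearMap.trace ℂ _ (k (s a) ∘ₗ v' a ∘ₗ u' a))
    (α : V → ℤ) (hdX : ∀ i, (Module.finrank ℂ (X i) : ℤ) = α i)
    (hdY : ∀ i, (Module.finrank ℂ (Y i) : ℤ) = α i) (hq : eF s t α α = 1) :
    (∃ f : ∀ i, X i →ₗ[ℂ] Y i, f ≠ 0 ∧ DD s t X Y u v u' v' f = 0) ∨
    (∃ f : ∀ i, Y i →ₗ[ℂ] X i, f ≠ 0 ∧ DD s t Y X u' v' u v f = 0) := by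
  by_contra! hcon
  obtain ⟨h1, h2⟩ := hcon
  have i1 : Function.Injective (DD s t X Y u v u' v') := by
    rw [← LinearMap.ker_eq_bot, LinearMap.ker_eq_bot']
    intro f hf
    by_contra hne
    exact h1 f hne hf
  have i2 : Function.Injective (DD s t Y X u' v' u v) := by
    rw [← LinearMap.ker_eq_bot, LinearMap.ker_eq_bot']
    intro f hf
    by_contra hne
    exact h2 f hne hf
  let Ψ := PP s t X Y ∘ₗ DD s t Y X u' v' u v
  have i3 : Function.Injective Ψ := (PP_injective s t X Y).comp i2
  let R := LinearMap.range (DD s t X Y u v u' v')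
  have hle : LinearMap.range Ψ ≤ R.dualAnnihilator := by
    rintro _ ⟨g, rfl⟩
    rw [Submodule.mem_dualAnnihilator]
    rintro _ ⟨f, rfl⟩
    exact core_orth u v u' v' hX hY f g
  have e1 := Submodule.finrank_mono hle
  rw [LinearMap.finrank_range_of_inj i3] at e1
  have e2 := Subspace.finrank_add_finrank_dualAnnihilator_eq R
  rw [LinearMap.finrank_range_of_inj i1] at e2
  rw [Module.finrank_prod] at e2
  simp only [Module.finrank_pi_fintype, Module.finrank_linearMap] at e1 e2
  zify at e1 e2
  simp only [hdX, hdY] at e1 e2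
  rw [eF] at hq
  have e3 : ∑ a, α (t a) * α (s a) = ∑ a, α (s a) * α (t a) :=
    Finset.sum_congr rfl fun a _ => mul_comm _ _
  rw [e3] at e2
  linarith

/-- Trace form of the relation. -/
theorem rel_trace (u : ∀ a, X (s a) →ₗ[ℂ] X (t a)) (v : ∀ a, X (t a) →ₗ[ℂ] X (s a))
    (h : ∑ a, (LinearMap.single ℂ X (t a) ∘ₗ u a ∘ₗ LinearMap.proj (s a)) ∘ₗ
        (LinearMap.single ℂ X (s a) ∘ₗ v a ∘ₗ LinearMap.proj (t a)) =
      ∑ a, (LinearMap.single ℂ X (s a) ∘ₗ v a ∘ₗ LinearMap.proj (t a)) ∘ₗ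
        (LinearMap.single ℂ X (t a) ∘ₗ u a ∘ₗ LinearMap.proj (s a)))
    (k : ∀ i, X i →ₗ[ℂ] X i) : ∑ a, LinearMap.trace ℂ _ (k (t a) ∘ₗ u a ∘ₗ v a) =
      ∑ a, LinearMap.trace ℂ _ (k (s a) ∘ₗ v a ∘ₗ u a) := by
  let K : (∀ i, X i) →ₗ[ℂ] (∀ i, X i) := LinearMap.pi fun i => k i ∘ₗ LinearMap.proj i
  have hps : ∀ i, (LinearMap.proj i : (∀ i, X i) →ₗ[ℂ] X i) ∘ₗ LinearMap.single ℂ X i =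
      LinearMap.id := by
    intro i; ext x; simp
  have hK : ∀ i, (LinearMap.proj i : (∀ i, X i) →ₗ[ℂ] X i) ∘ₗ K = k i ∘ₗ LinearMap.proj i := by
    intro i; rfl
  have key : ∀ i j (p : X i →ₗ[ℂ] X j) (q : X j →ₗ[ℂ] X i),
      LinearMap.trace ℂ _ (K ∘ₗ (LinearMap.single ℂ X j ∘ₗ p ∘ₗ LinearMap.proj i) ∘ₗ
        (LinearMap.single ℂ X i ∘ₗ q ∘ₗ LinearMap.proj j)) =
      LinearMap.trace ℂ _ (k j ∘ₗ p ∘ₗ q) := by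
    intro i j p q
    have e1 : K ∘ₗ (LinearMap.single ℂ X j ∘ₗ p ∘ₗ LinearMap.proj i) ∘ₗ
        (LinearMap.single ℂ X i ∘ₗ q ∘ₗ LinearMap.proj j) =
        (K ∘ₗ LinearMap.single ℂ X j ∘ₗ p ∘ₗ q) ∘ₗ LinearMap.proj j := by
      refine LinearMap.ext fun x => ?_
      change K (Pi.single j (p ((Pi.single i (q (x j)) : ∀ i, X i) i))) =
        K (Pi.single j (p (q (x j))))
      rw [Pi.single_eq_same]
    rw [e1, LinearMap.trace_comp_comm']
    congr 1
    ext x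
    simp [K]
  have h2 := congrArg (fun T => LinearMap.trace ℂ _ (K ∘ₗ T)) h
  have hcs : ∀ T : A → ((∀ i, X i) →ₗ[ℂ] (∀ i, X i)), K ∘ₗ (∑ a, T a) = ∑ a, K ∘ₗ T a :=
    fun T => Finset.mul_sum (R := Module.End ℂ (∀ i, X i)) _ _ _
  simp only [hcs, map_sum, key] at h2
  exact h2

end Core

theorem stable_unique {Q : FinQuiver} {α : Q.V → ℤ} (hq : Q.titsForm α = 1)
    {X Y : QRep Q.double ℂ} (hX : LamAlphaStable α X) (hY : LamAlphaStable α Y)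
    (hrX : PreprojRel Q X) (hrY : PreprojRel Q Y) (hdX : X.dimVec = α) (hdY : Y.dimVec = α) :
    Nonempty (RepIso X Y) := by
  let XV : Q.V → Type := X.carrier
  let YV : Q.V → Type := Y.carrier
  letI : ∀ i, AddCommGroup (XV i) := X.acgI
  letI : ∀ i, Module ℂ (XV i) := X.modI
  haveI : ∀ i, FiniteDimensional ℂ (XV i) := X.fdI
  letI : ∀ i, AddCommGroup (YV i) := Y.acgI
  letI : ∀ i, Module ℂ (YV i) := Y.modI
  haveI : ∀ i, FiniteDimensional ℂ (YV i) := Y.fdI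
  let u : ∀ a, XV (Q.src a) →ₗ[ℂ] XV (Q.tgt a) := fun a => X.map (Sum.inl a)
  let v : ∀ a, XV (Q.tgt a) →ₗ[ℂ] XV (Q.src a) := fun a => X.map (Sum.inr a)
  let u' : ∀ a, YV (Q.src a) →ₗ[ℂ] YV (Q.tgt a) := fun a => Y.map (Sum.inl a)
  let v' : ∀ a, YV (Q.tgt a) →ₗ[ℂ] YV (Q.src a) := fun a => Y.map (Sum.inr a)
  have tX := rel_trace u v hrX
  have tY := rel_trace u' v' hrY
  rcases core_exists u v u' v' tX tY α (fun i => congrFun hdX i) (fun i => congrFun hdY i) hq with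
    ⟨f, hf0, hf⟩ | ⟨f, hf0, hf⟩
  · refine iso_of_hom hX hY hdX hdY f ?_ (fun h => hf0 (funext h))
    rintro (a | a) x
    · have := congrArg (fun w => w.1 a x) hf
      exact sub_eq_zero.1 this
    · have := congrArg (fun w => w.2 a x) hf
      exact sub_eq_zero.1 this
  · obtain ⟨e⟩ : Nonempty (RepIso Y X) := by
      refine iso_of_hom hY hX hdY hdX f ?_ (fun h => hf0 (funext h))
      rintro (a | a) x
      · have := congrArg (fun w => w.1 a x) hf
        exact sub_eq_zero.1 this
      · have := congrArg (fun w => w.2 a x) hf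
        exact sub_eq_zero.1 this
    exact e.symm'

theorem AffineQuiver.aff (Q : AffineQuiver) : Aff Q.src Q.tgt Q.δ where
  noloop := Q.noLoops
  wf := wf_of_acyclic Q.acyclic
  psd := Q.posSemidef
  pos := Q.delta_pos
  rad := Q.radical_iff

theorem stable_of_irregular_root_unique
    (Q : AffineQuiver) (α : Q.V → ℤ)
    (hpos : ∀ i, 0 ≤ α i) (hreal : Q.titsForm α = 1)
    (hirr : Q.defect α ≠ 0) :
    (∀ P : QRep Q.toFinQuiver ℂ, P.Indecomposable → P.dimVec = α →
        ∀ X : QRep Q.toFinQuiver.double ℂ, PreprojRel Q.toFinQuiver X →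
          LamAlphaStable α X → X.dimVec = α →
            Nonempty (RepIso X (extendZero P))) ∧
      (∃ X : QRep Q.toFinQuiver.double ℂ, PreprojRel Q.toFinQuiver X ∧
        LamAlphaStable α X ∧ X.dimVec = α) ∧
      ∀ X Y : QRep Q.toFinQuiver.double ℂ,
        PreprojRel Q.toFinQuiver X → LamAlphaStable α X → X.dimVec = α →
        PreprojRel Q.toFinQuiver Y → LamAlphaStable α Y → Y.dimVec = α →
          Nonempty (RepIso X Y) := by
  have hcl : TClaim Q.src Q.tgt α := Q.aff.claim α hpos hreal hirr
  refine ⟨?_, ?_, ?_⟩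
  · intro P hP hd X hr hs hdX
    have hb : QBrick P := P.brick_of_toT (hcl.1 _ (P.toT_indec hP) (P.toT_dim.trans hd))
    exact stable_unique hreal hs (brick_stable hb hd hreal) hr (extendZero_rel P) hdX hd
  · obtain ⟨M, hM, hd⟩ := hcl.2
    have hb := M.toQ_brick hM
    exact ⟨extendZero M.toQ, extendZero_rel _, brick_stable hb hd hreal, hd⟩
  · intro X Y hrX hsX hdX hrY hsY hdY
    exact stable_unique hreal hsX hsY hrX hrY hdX hdY
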